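/- arXiv:2306.03605 — 11 statements merged into one kernel-verified Lean document; each statement's English description precedes it below -/
import Mathlib

section
/- Let F be a field, q a natural number, S a finite subset of F^q, and B a finite set of polynomials in F[x_1,...,x_q]. Then there exists a subset S' ⊆ S with |S'| ≤ |B| such that for every polynomial p in the F-linear span of B, if p(x) ≠ 0 for some x ∈ S, then p(x') ≠ 0 for some x' ∈ S'. -/
/-- Representative set for a span of polynomials.
Let `F` be a field, `q` a natural number, `S` a finite subset of `F^q`, and `B` a finite
set of polynomials in `F[x_1,...,x_q]`. Then there exists `S' ⊆ S` with `|S'| ≤ |B|`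
such that for every polynomial `p` in the `F`-linear span of `B`, if `p` does not vanish
on some `x ∈ S`, then `p` does not vanish on some `x' ∈ S'`. -/
theorem stmt_0 {F : Type*} [Field F] (q : ℕ)
    (S : Finset (Fin q → F)) (B : Finset (MvPolynomial (Fin q) F)) :
    ∃ S' ⊆ S, S'.card ≤ B.card ∧
      ∀ p ∈ Submodule.span F (B : Set (MvPolynomial (Fin q) F)),
        (∃ x ∈ S, MvPolynomial.eval x p ≠ 0) →
        ∃ x' ∈ S', MvPolynomial.eval x' p ≠ 0 := by
  classical
  let v : (Fin q → F) → (B → F) := fun x b => MvPolynomial.eval x (b : MvPolynomial (Fin q) F)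
  obtain ⟨b, hbS, -, hspan, hli⟩ := exists_linearIndepOn_extension
    (K := F) (v := v) (s := ∅) (t := (S : Set (Fin q → F)))
    (linearIndepOn_empty F v) (Set.empty_subset _)
  have hfin : b.Finite := S.finite_toSet.subset hbS
  lift b to Finset (Fin q → F) using hfin
  refine ⟨b, by exact_mod_cast hbS, ?_, ?_⟩
  · have h : LinearIndependent F (fun x : (b : Set (Fin q → F)) => v x) := hli
    have := h.fintype_card_le_finrank
    simpa using this
  · rintro p hp ⟨x, hx, hxp⟩
    by_contra! hcon
    obtain ⟨c, hc⟩ := Submodule.mem_span_finset'.1 hp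
    let φ : (B → F) →ₗ[F] F := ∑ i, c i • LinearMap.proj i
    have hφ : ∀ y, φ (v y) = MvPolynomial.eval y p := by
      intro y
      rw [← hc]
      simp [φ, v, MvPolynomial.smul_eval]
    have hle : Submodule.span F (v '' (b : Set (Fin q → F))) ≤ LinearMap.ker φ := by
      rw [Submodule.span_le]
      rintro _ ⟨y, hy, rfl⟩
      change φ (v y) = 0
      rw [hφ]
      exact hcon y hy
    have h0 : φ (v x) = 0 := hle (hspan ⟨x, hx, rfl⟩)
    exact hxp (by rw [← hφ, h0])
end

section
/- Let F be a field, q and d natural numbers, and S a finite subset of F^q. Then there exists a subset S' ⊆ S with |S'| ≤ binomial(q+d, d) such that for every polynomial p in F[x_1,...,x_q] of total degree at most d, if p(x) ≠ 0 for some x ∈ S, then p(x') ≠ 0 for some x' ∈ S'. -/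
theorem multichoose_sum (q d : ℕ) :
    ∑ n ∈ Finset.range (d + 1), Nat.multichoose q n = (q + d).choose d := by
  have h : ∑ n ∈ Finset.range (d + 1), Nat.multichoose q n = Nat.multichoose (q + 1) d := by
    induction d with
    | zero => simp
    | succ d ih => rw [Finset.sum_range_succ, ih, Nat.multichoose_succ_succ, add_comm]
  rw [h, Nat.multichoose_eq]
  congr 1
  omega

/-- The exponents of total degree at most `d`. -/
def expSet (q d : ℕ) : Finset (Fin q →₀ ℕ) :=
  (Finset.range (d + 1)).biUnion fun n => Finset.finsuppAntidiag Finset.univ n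

theorem expSet_card (q d : ℕ) : (expSet q d).card ≤ (q + d).choose d := by
  rw [← multichoose_sum]
  refine Finset.card_biUnion_le.trans (Finset.sum_le_sum fun n _ => ?_)
  rw [Finset.card_finsuppAntidiag_nat_eq_multichoose]
  simp

theorem support_subset_expSet {F : Type*} [Field F] {q d : ℕ} (p : MvPolynomial (Fin q) F)
    (hp : p.totalDegree ≤ d) : p.support ⊆ expSet q d := by
  intro m hm
  have h := (MvPolynomial.le_totalDegree hm).trans hp
  simp only [expSet, Finset.mem_biUnion, Finset.mem_range, Finset.mem_finsuppAntidiag]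
  refine ⟨m.sum fun _ e => e, by omega, ?_, Finset.subset_univ _⟩
  rw [Finsupp.sum_fintype _ _ (fun _ => rfl)]

/-- Representative set for bounded-degree sieving polynomials.
Let `F` be a field, `q, d` natural numbers, `S` a finite subset of `F^q`. Then there is
`S' ⊆ S` with `|S'| ≤ C(q+d, d)` such that for every polynomial of total degree at most
`d`, if it does not vanish on some `x ∈ S`, then it does not vanish on some `x' ∈ S'`. -/
theorem stmt_1 {F : Type*} [Field F] (q d : ℕ) (S : Finset (Fin q → F)) :
    ∃ S' ⊆ S, S'.card ≤ (q + d).choose d ∧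
      ∀ p : MvPolynomial (Fin q) F, p.totalDegree ≤ d →
        (∃ x ∈ S, MvPolynomial.eval x p ≠ 0) →
        ∃ x' ∈ S', MvPolynomial.eval x' p ≠ 0 := by
  classical
  let v : S → (expSet q d → F) := fun x m => ∏ i, x.1 i ^ m.1 i
  obtain ⟨κ, a, ha, hsp, hli⟩ := exists_linearIndependent' F v
  haveI : Finite κ := Finite.of_injective a ha
  haveI : Fintype κ := Fintype.ofFinite κ
  have hcard : Fintype.card κ ≤ (q + d).choose d := by
    have h := hli.fintype_card_le_finrank
    rw [Module.finrank_fintype_fun_eq_card, Fintype.card_coe] at h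
    exact h.trans (expSet_card q d)
  refine ⟨Finset.univ.image fun k => (a k).1, ?_, Finset.card_image_le.trans hcard, ?_⟩
  · intro x hx
    obtain ⟨k, -, rfl⟩ := Finset.mem_image.1 hx
    exact (a k).2
  · rintro p hp ⟨x, hx, hne⟩
    by_contra! hall
    apply hne
    let L : (expSet q d → F) →ₗ[F] F :=
      ∑ m : expSet q d, (p.coeff m.1) • LinearMap.proj m
    have hL : ∀ y : S, L (v y) = MvPolynomial.eval y.1 p := by
      intro y
      rw [MvPolynomial.eval_eq', Finset.sum_subset (support_subset_expSet p hp)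
        (fun m _ hm => by rw [MvPolynomial.notMem_support_iff.1 hm, zero_mul]),
        ← Finset.sum_coe_sort]
      simp [L, v]
    have hle : Submodule.span F (Set.range v) ≤ LinearMap.ker L := by
      rw [← hsp, Submodule.span_le]
      rintro _ ⟨k, rfl⟩
      have := hall (a k).1 (Finset.mem_image.2 ⟨k, Finset.mem_univ _, rfl⟩)
      simpa [hL] using this
    rw [← hL ⟨x, hx⟩]
    exact hle (Submodule.subset_span ⟨⟨x, hx⟩, rfl⟩)
end

section
/- Let F be a field, q a natural number, S a finite subset of F^q equipped with a linear order ⪯, and B a finite set of polynomials in F[x_1,...,x_q]. Then there exists a subset S' ⊆ S with |S'| ≤ |B| such that for every polynomial p in the F-linear span of B, either p vanishes on all of S, or there exists x ∈ S' with p(x) ≠ 0 and x ⪯ x' for every x' ∈ S with p(x') ≠ 0. -/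
/-- Weighted/ordered representative set for a span of polynomials.
Let `F` be a field, `q` a natural number, `S` a finite subset of `F^q` equipped with a
linear order `le`, and `B` a finite set of polynomials. Then there exists `S' ⊆ S` with
`|S'| ≤ |B|` such that for every polynomial `p` in the `F`-linear span of `B`, either `p`
vanishes on all of `S`, or some `x ∈ S'` has `p(x) ≠ 0` and `x ⪯ x'` for every `x' ∈ S`
with `p(x') ≠ 0`. -/
theorem stmt_2 {F : Type*} [Field F] (q : ℕ)
    (S : Finset (Fin q → F)) (B : Finset (MvPolynomial (Fin q) F))
    (le : {x // x ∈ S} → {x // x ∈ S} → Prop)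
    (hle : IsLinearOrder {x // x ∈ S} le) :
    ∃ S' ⊆ S, S'.card ≤ B.card ∧
      ∀ p ∈ Submodule.span F (B : Set (MvPolynomial (Fin q) F)),
        (∀ x ∈ S, MvPolynomial.eval x p = 0) ∨
        ∃ x, ∃ hx : x ∈ S, x ∈ S' ∧ MvPolynomial.eval x p ≠ 0 ∧
          ∀ x', ∀ hx' : x' ∈ S, MvPolynomial.eval x' p ≠ 0 → le ⟨x, hx⟩ ⟨x', hx'⟩ := by
  classical
  let : LinearOrder {x // x ∈ S} :=
    { le := le
      le_refl := fun a => hle.refl a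
      le_trans := fun a b c => hle.trans a b c
      le_antisymm := fun a b => hle.antisymm a b
      le_total := fun a b => hle.total a b
      toDecidableLE := Classical.decRel _ }
  let W := Submodule.span F (B : Set (MvPolynomial (Fin q) F))
  let P : {x // x ∈ S} → W → Prop := fun x p =>
    MvPolynomial.eval x.1 p.1 ≠ 0 ∧ ∀ y, y < x → MvPolynomial.eval y.1 p.1 = 0
  let T : Finset {x // x ∈ S} := Finset.univ.filter (fun x => ∃ p, P x p)
  have hT : ∀ x : T, ∃ p, P x.1 p := fun x => (Finset.mem_filter.1 x.2).2
  choose f hf using hT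
  have hli : LinearIndependent F f := by
    rw [linearIndependent_iff']
    intro s g hg
    by_contra! hne
    obtain ⟨i0, hi0, hgi0⟩ := hne
    obtain ⟨i, hi, hmin⟩ := Finset.exists_min_image (s.filter (fun i => g i ≠ 0))
      (fun i => i.1) ⟨i0, Finset.mem_filter.2 ⟨hi0, hgi0⟩⟩
    rw [Finset.mem_filter] at hi
    have h := congrArg (fun p : W => MvPolynomial.eval i.1.1 p.1) hg
    simp only [Submodule.coe_sum, Submodule.coe_smul, map_sum, MvPolynomial.smul_eval,
      Submodule.coe_zero, map_zero] at h
    rw [Finset.sum_eq_single_of_mem i hi.1] at h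
    · rcases mul_eq_zero.1 h with h | h
      · exact hi.2 h
      · exact (hf i).1 h
    · intro j hj hji
      by_cases hgj : g j = 0
      · simp [hgj]
      · have hle := hmin j (Finset.mem_filter.2 ⟨hj, hgj⟩)
        have hlt : i.1 < j.1 := lt_of_le_of_ne hle (fun e => hji (Subtype.ext e.symm))
        rw [(hf j).2 _ hlt, mul_zero]
  have : Module.Finite F W := Module.Finite.span_of_finite F B.finite_toSet
  have hcard := hli.fintype_card_le_finrank
  rw [Fintype.card_coe] at hcard
  refine ⟨T.image Subtype.val, ?_, ?_, ?_⟩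
  · intro x hx
    obtain ⟨y, -, rfl⟩ := Finset.mem_image.1 hx
    exact y.2
  · exact Finset.card_image_le.trans (hcard.trans (finrank_span_finset_le_card B))
  · intro p hp
    by_cases hz : ∀ x ∈ S, MvPolynomial.eval x p = 0
    · exact Or.inl hz
    · right
      push Not at hz
      obtain ⟨x0, hx0, hpx0⟩ := hz
      obtain ⟨E, hE⟩ : ∃ E : Finset {x // x ∈ S}, ∀ y, y ∈ E ↔ MvPolynomial.eval y.1 p ≠ 0 :=
        ⟨Finset.univ.filter (fun y => MvPolynomial.eval y.1 p ≠ 0), fun y => by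
          rw [Finset.mem_filter]
          exact ⟨fun h => h.2, fun h => ⟨Finset.mem_univ _, h⟩⟩⟩
      have hne : E.Nonempty := ⟨⟨x0, hx0⟩, (hE _).2 hpx0⟩
      obtain ⟨x, hx, hmin⟩ := Finset.exists_min_image E (fun y => y) hne
      have hx2 := (hE x).1 hx
      have hmin' : ∀ y : {x // x ∈ S}, MvPolynomial.eval y.1 p ≠ 0 → x ≤ y :=
        fun y hy => hmin y ((hE y).2 hy)
      have hPx : P x ⟨p, hp⟩ := by
        refine ⟨hx2, ?_⟩
        intro y hy
        by_contra h
        exact absurd hy (not_lt.2 (hmin' y h))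
      have hxT : x ∈ T := by
        rw [Finset.mem_filter]
        exact ⟨Finset.mem_univ _, _, hPx⟩
      have hxI : x.1 ∈ T.image Subtype.val := Finset.mem_image_of_mem _ hxT
      exact ⟨x.1, x.2, hxI, hx2, fun x' hx' h => hmin' ⟨x', hx'⟩ h⟩
end

section
/- Let F be a field, let A be a matrix over F with k rows whose columns are indexed by a finite set U, and suppose A has rank k. Let q ≤ k and let 𝒮 be a family of q-element subsets of U. Then there exists a subfamily 𝒮' ⊆ 𝒮 with |𝒮'| ≤ binomial(k, q) such that for every set X ⊆ U with |X| = k − q: if there exists Y ∈ 𝒮 with X ∩ Y = ∅ and the columns indexed by X ∪ Y linearly independent over F, then there exists Y' ∈ 𝒮' with X ∩ Y' = ∅ and the columns indexed by X ∪ Y' linearly independent over F. -/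
/-- Determinant of the vectors `x` followed by `v`, alternating in `v`. -/
noncomputable def detRight {F : Type*} [Field F] {k m q : ℕ} (σ : Fin k ≃ Fin m ⊕ Fin q)
    (x : Fin m → (Fin k → F)) : (Fin k → F) [⋀^Fin q]→ₗ[F] F where
  toFun v := ((Matrix.detRowAlternating (n := Fin k) (R := F)).domDomCongr σ) (Sum.elim x v)
  map_update_add' v i a b := by
    rename_i inst
    obtain rfl : inst = instDecidableEqFin q := Subsingleton.elim _ _
    simp only [← Sum.update_elim_inr]
    exact AlternatingMap.map_update_add _ _ _ _ _
  map_update_smul' v i a b := by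
    rename_i inst
    obtain rfl : inst = instDecidableEqFin q := Subsingleton.elim _ _
    simp only [← Sum.update_elim_inr]
    exact AlternatingMap.map_update_smul _ _ _ _ _
  map_eq_zero_of_eq' v i j h hij := by
    refine AlternatingMap.map_eq_zero_of_eq _ _ (i := Sum.inr i) (j := Sum.inr j) ?_ ?_
    · simpa using h
    · simpa using hij

theorem detRight_ne_zero {F : Type*} [Field F] {k m q : ℕ} (σ : Fin k ≃ Fin m ⊕ Fin q)
    (x : Fin m → (Fin k → F)) (v : Fin q → (Fin k → F)) :
    detRight σ x v ≠ 0 ↔ LinearIndependent F (Sum.elim x v) := by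
  have h1 : detRight σ x v = Matrix.det (Matrix.of (Sum.elim x v ∘ σ)) := rfl
  rw [h1, ← isUnit_iff_ne_zero, ← Matrix.isUnit_iff_isUnit_det,
    ← Matrix.linearIndependent_rows_iff_isUnit, ← linearIndependent_equiv σ]
  rfl

theorem li_union {F : Type*} [Field F] {U : Type*} [DecidableEq U] {k m q : ℕ}
    (c : U → (Fin k → F)) (X Y : Finset U) (eX : Fin m ≃ X) (eY : Fin q ≃ Y) :
    (X ∩ Y = ∅ ∧ LinearIndependent F (fun u : ↥(X ∪ Y) => c u)) ↔
      LinearIndependent F (Sum.elim (fun i => c (eX i)) (fun i => c (eY i))) := by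
  have key : X ∩ Y = ∅ → (LinearIndependent F (fun u : ↥(X ∪ Y) => c u) ↔
      LinearIndependent F (Sum.elim (fun i => c (eX i)) (fun i => c (eY i)))) := by
    intro hd
    have hd' : ∀ u, u ∈ X → u ∈ Y → False := fun u h1 h2 => by
      have : u ∈ X ∩ Y := Finset.mem_inter.2 ⟨h1, h2⟩
      simp [hd] at this
    let g : Fin m ⊕ Fin q → ↥(X ∪ Y) := Sum.elim
      (fun i => ⟨eX i, Finset.mem_union_left _ (eX i).2⟩)
      (fun i => ⟨eY i, Finset.mem_union_right _ (eY i).2⟩)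
    have hg : Function.Bijective g := by
      constructor
      · rintro (i | i) (j | j) h
        · have h' : (eX i : U) = eX j := congrArg (fun z : ↥(X ∪ Y) => (z : U)) h
          rw [eX.injective (Subtype.ext h')]
        · have h' : (eX i : U) = eY j := congrArg (fun z : ↥(X ∪ Y) => (z : U)) h
          exact (hd' _ (eX i).2 (h' ▸ (eY j).2)).elim
        · have h' : (eY i : U) = eX j := congrArg (fun z : ↥(X ∪ Y) => (z : U)) h
          exact (hd' _ (eX j).2 (h' ▸ (eY i).2)).elim
        · have h' : (eY i : U) = eY j := congrArg (fun z : ↥(X ∪ Y) => (z : U)) h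
          rw [eY.injective (Subtype.ext h')]
      · rintro ⟨u, hu⟩
        rcases Finset.mem_union.1 hu with h | h
        · exact ⟨Sum.inl (eX.symm ⟨u, h⟩), by simp [g]⟩
        · exact ⟨Sum.inr (eY.symm ⟨u, h⟩), by simp [g]⟩
    rw [← linearIndependent_equiv (Equiv.ofBijective g hg)]
    have : (fun u : ↥(X ∪ Y) => c u) ∘ (Equiv.ofBijective g hg) =
        Sum.elim (fun i => c (eX i)) (fun i => c (eY i)) := by
      ext (i | i) <;> rfl
    rw [this]
  refine ⟨fun h => (key h.1).1 h.2, fun h => ?_⟩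
  have hd : X ∩ Y = ∅ := by
    rw [Finset.eq_empty_iff_forall_notMem]
    intro u hu
    obtain ⟨h1, h2⟩ := Finset.mem_inter.1 hu
    have := h.injective (a₁ := Sum.inl (eX.symm ⟨u, h1⟩)) (a₂ := Sum.inr (eY.symm ⟨u, h2⟩))
      (by simp)
    simp at this
  exact ⟨hd, (key hd).2 h⟩

/-- Representative sets lemma for linear matroids, linear-algebra form.
Let `A` be a `k × U` matrix over a field `F` of rank `k`, `q ≤ k`, and `𝒮` a family of
`q`-element subsets of `U`. Then there exists `𝒮' ⊆ 𝒮` with `|𝒮'| ≤ C(k, q)` such that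
for every `X ⊆ U` with `|X| = k − q`: if some `Y ∈ 𝒮` is disjoint from `X` with the
columns `X ∪ Y` linearly independent, then some `Y' ∈ 𝒮'` has the same property. -/
theorem stmt_3 {F : Type*} [Field F] {U : Type*} [Fintype U] [DecidableEq U]
    (k q : ℕ) (hqk : q ≤ k) (A : Matrix (Fin k) U F) (hrank : A.rank = k)
    (𝒮 : Finset (Finset U)) (h𝒮 : ∀ Y ∈ 𝒮, Y.card = q) :
    ∃ 𝒮' ⊆ 𝒮, 𝒮'.card ≤ k.choose q ∧
      ∀ X : Finset U, X.card = k - q →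
        (∃ Y ∈ 𝒮, X ∩ Y = ∅ ∧
          LinearIndependent F (fun u : ↥(X ∪ Y) => fun i => A i (u : U))) →
        ∃ Y' ∈ 𝒮', X ∩ Y' = ∅ ∧
          LinearIndependent F (fun u : ↥(X ∪ Y') => fun i => A i (u : U)) := by
  classical
  let c : U → (Fin k → F) := fun u i => A i u
  let w : 𝒮 → ⋀[F]^q (Fin k → F) := fun Y =>
    exteriorPower.ιMulti F q (fun i => c ((Y.1.equivFinOfCardEq (h𝒮 Y.1 Y.2)).symm i))
  obtain ⟨t, ht, hspan, hli⟩ := exists_linearIndependent F (Set.range w)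
  have hfin : t.Finite := (Set.finite_range w).subset ht
  choose f hf using fun x : t => ht x.2
  haveI : Fintype t := hfin.fintype
  refine ⟨Finset.univ.image (fun x : t => (f x : Finset U)), ?_, ?_, ?_⟩
  · intro Y hY
    obtain ⟨x, -, rfl⟩ := Finset.mem_image.1 hY
    exact (f x).2
  · refine Finset.card_image_le.trans ?_
    have := hli.fintype_card_le_finrank
    rw [exteriorPower.finrank_eq] at this
    simpa using this
  · rintro X hX ⟨Y, hY, hXY⟩
    let σ : Fin k ≃ Fin (k - q) ⊕ Fin q :=
      (finCongr (by omega : k = (k - q) + q)).trans finSumFinEquiv.symm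
    let eX := (X.equivFinOfCardEq hX).symm
    let L := exteriorPower.alternatingMapLinearEquiv (detRight σ (fun i => c (eX i)))
    have hL : ∀ Z : 𝒮, L (w Z) ≠ 0 ↔ (X ∩ Z.1 = ∅ ∧
        LinearIndependent F (fun u : ↥(X ∪ Z.1) => c u)) := by
      intro Z
      rw [li_union c X Z.1 eX (Z.1.equivFinOfCardEq (h𝒮 Z.1 Z.2)).symm,
        ← detRight_ne_zero σ]
      simp only [L, w, exteriorPower.alternatingMapLinearEquiv_apply_ιMulti]
    by_contra hcon
    have hz : ∀ x ∈ t, L x = 0 := by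
      intro x hx
      by_contra hne
      refine hcon ⟨f ⟨x, hx⟩, Finset.mem_image_of_mem _ (Finset.mem_univ _), ?_⟩
      refine (hL (f ⟨x, hx⟩)).1 ?_
      rw [hf]
      exact hne
    have hle : Submodule.span F t ≤ LinearMap.ker L := Submodule.span_le.2 hz
    rw [hspan] at hle
    exact (hL ⟨Y, hY⟩).2 hXY (hle (Submodule.subset_span ⟨_, rfl⟩))
end

section
/- Let F be a field, S a finite set, ψ₁ : S → F^{r₁} and ψ₂ : S → F^{r₂} maps, P₁, P₂ ⊆ S subsets, and p₁ ∈ F[x_1,...,x_{r₁}], p₂ ∈ F[x_1,...,x_{r₂}] polynomials of total degree at most d such that for all x ∈ S: p₁(ψ₁(x)) ≠ 0 if and only if x ∈ P₁, and p₂(ψ₂(x)) ≠ 0 if and only if x ∈ P₂. If |F| > |S|, then there exists z ∈ F such that for all x ∈ S: p₁(ψ₁(x)) + z·p₂(ψ₂(x)) ≠ 0 if and only if x ∈ P₁ ∪ P₂. -/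
/-- Union of two sieving polynomial properties.
Given sieving polynomials `p₁, p₂` (of total degree at most `d`, with respect to maps
`ψ₁, ψ₂`) for properties `P₁, P₂ ⊆ S`, if `|F| > |S|` then there is a constant `z ∈ F`
such that `p₁(ψ₁(x)) + z·p₂(ψ₂(x)) ≠ 0` exactly when `x ∈ P₁ ∪ P₂`. -/
theorem stmt_4 {F : Type*} [Field F] {α : Type*} [DecidableEq α] (r₁ r₂ d : ℕ)
    (S : Finset α) (ψ₁ : α → Fin r₁ → F) (ψ₂ : α → Fin r₂ → F)
    (P₁ P₂ : Finset α) (hP₁ : P₁ ⊆ S) (hP₂ : P₂ ⊆ S)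
    (p₁ : MvPolynomial (Fin r₁) F) (p₂ : MvPolynomial (Fin r₂) F)
    (hd₁ : p₁.totalDegree ≤ d) (hd₂ : p₂.totalDegree ≤ d)
    (h₁ : ∀ x ∈ S, (MvPolynomial.eval (ψ₁ x) p₁ ≠ 0 ↔ x ∈ P₁))
    (h₂ : ∀ x ∈ S, (MvPolynomial.eval (ψ₂ x) p₂ ≠ 0 ↔ x ∈ P₂))
    (hF : (S.card : Cardinal) < Cardinal.mk F) :
    ∃ z : F, ∀ x ∈ S,
      (MvPolynomial.eval (ψ₁ x) p₁ + z * MvPolynomial.eval (ψ₂ x) p₂ ≠ 0 ↔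
        x ∈ P₁ ∪ P₂) := by
  classical
  obtain ⟨z, hz⟩ : ∃ z : F, z ∉ S.image
      (fun x => -MvPolynomial.eval (ψ₁ x) p₁ / MvPolynomial.eval (ψ₂ x) p₂) := by
    by_contra! hcon
    set T := S.image
      (fun x => -MvPolynomial.eval (ψ₁ x) p₁ / MvPolynomial.eval (ψ₂ x) p₂) with hT
    have hle : T.card ≤ S.card := Finset.card_image_le
    let e : F ≃ T := ⟨fun z => ⟨z, hcon z⟩, fun t => t.1, fun _ => rfl, fun _ => rfl⟩
    have hc : Cardinal.mk F = (T.card : Cardinal) := by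
      rw [Cardinal.mk_congr e, Cardinal.mk_coe_finset]
    rw [hc] at hF
    have hlt : S.card < T.card := by exact_mod_cast hF
    omega
  refine ⟨z, fun x hx => ?_⟩
  rw [Finset.mem_union, ← h₁ x hx, ← h₂ x hx]
  by_cases hb : MvPolynomial.eval (ψ₂ x) p₂ = 0
  · simp [hb]
  · refine ⟨fun _ => Or.inr hb, fun _ h0 => hz ?_⟩
    refine Finset.mem_image.mpr ⟨x, hx, ?_⟩
    rw [div_eq_iff hb]
    linear_combination -h0
end

section
/- Let F be a field, V a finite set, and A a skew-symmetric matrix over F indexed by V. Let T ⊆ V with |T| = k, let q be a natural number, and let 𝒮 be a family of q-element subsets of V. Then there exists a subfamily 𝒮' ⊆ 𝒮 with |𝒮'| ≤ binomial(k·q + q·(q−1)/2 + q, q) such that for every X ⊆ T: if some Y ∈ 𝒮 extends X with respect to A, then some Y' ∈ 𝒮' extends X with respect to A. -/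
/-- The principal submatrix `A[S]` of a matrix `A` indexed by `V`, for `S ⊆ V`. -/
def principalSub {V F : Type*} (A : Matrix V V F) (S : Finset V) : Matrix ↥S ↥S F :=
  A.submatrix (fun x => (x : V)) (fun x => (x : V))

/-- `Y` extends `X` with respect to `A`: `X ∩ Y = ∅` and `A[X ∪ Y]` is nonsingular. -/
def ExtendsIn {V F : Type*} [DecidableEq V] [Field F] (A : Matrix V V F)
    (X Y : Finset V) : Prop :=
  X ∩ Y = ∅ ∧ (principalSub A (X ∪ Y)).det ≠ 0

theorem alt_det_isSquare_field {K : Type*} [Field K] : ∀ (n : ℕ) {ι : Type} [Fintype ι] [DecidableEq ι]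
    (M : Matrix ι ι K), Fintype.card ι = n → (∀ i j, M i j = - M j i) → (∀ i, M i i = 0) →
    ∃ p, M.det = p ^ 2 := by
  intro n
  induction n using Nat.strong_induction_on with
  | _ n ih =>
  intro ι _ _ M hn hs hd
  by_cases hM : ∃ a b, M a b ≠ 0
  · obtain ⟨a, b, hab⟩ := hM
    have hne : a ≠ b := by
      rintro rfl
      exact hab (hd a)
    let f : Fin 2 ⊕ {i : ι // i ≠ a ∧ i ≠ b} → ι := Sum.elim ![a, b] (fun x => x.1)
    have hf : Function.Bijective f := by
      clear ih hs hd
      constructor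
      · rintro (i | ⟨i, hi⟩) (j | ⟨j, hj⟩) h
        · fin_cases i <;> fin_cases j <;> simp_all [f]
        · fin_cases i
          · exact absurd h.symm hj.1
          · exact absurd h.symm hj.2
        · fin_cases j
          · exact absurd h hi.1
          · exact absurd h hi.2
        · simp_all [f]
      · intro x
        by_cases h1 : x = a
        · exact ⟨Sum.inl 0, by simp [f, h1]⟩
        by_cases h2 : x = b
        · exact ⟨Sum.inl 1, by simp [f, h2]⟩
        exact ⟨Sum.inr ⟨x, h1, h2⟩, rfl⟩
    let e := Equiv.ofBijective f hf
    set N := M.submatrix e e with hN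
    have hdet : N.det = M.det := Matrix.det_submatrix_equiv_self e M
    set c := M a b with hc
    have hA : N.toBlocks₁₁ = !![0, c; -c, 0] := by
      ext i j
      have h2 : M b a = - c := hs b a
      fin_cases i <;> fin_cases j <;> simp [hN, Matrix.toBlocks₁₁, e, f, hd, h2, hc]
    have hinv : !![0, c; -c, 0] * !![0, -c⁻¹; c⁻¹, 0] = (1 : Matrix (Fin 2) (Fin 2) K) := by
      ext i j
      fin_cases i <;> fin_cases j <;> simp [Matrix.mul_apply, Fin.sum_univ_two, hab]
    letI : Invertible (!![0, c; -c, 0] : Matrix (Fin 2) (Fin 2) K) :=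
      ⟨!![0, -c⁻¹; c⁻¹, 0], mul_eq_one_comm.1 hinv, hinv⟩
    have hi : ⅟(!![0, c; -c, 0] : Matrix (Fin 2) (Fin 2) K) = !![0, -c⁻¹; c⁻¹, 0] := rfl
    have key := Matrix.det_fromBlocks₁₁ (!![0, c; -c, 0] : Matrix (Fin 2) (Fin 2) K)
      N.toBlocks₁₂ N.toBlocks₂₁ N.toBlocks₂₂
    have hblk : Matrix.fromBlocks !![0, c; -c, 0] N.toBlocks₁₂ N.toBlocks₂₁ N.toBlocks₂₂ = N := by
      rw [← hA, Matrix.fromBlocks_toBlocks]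
    rw [hblk, hdet, hi] at key
    have hlt : Fintype.card {i : ι // i ≠ a ∧ i ≠ b} < n := by
      rw [← hn]
      exact Fintype.card_subtype_lt (x := a) (by simp)
    obtain ⟨p, hp⟩ := ih _ hlt
      (N.toBlocks₂₂ - N.toBlocks₂₁ * !![0, -c⁻¹; c⁻¹, 0] * N.toBlocks₁₂) rfl (by
        intro i j
        simp only [Matrix.sub_apply, Matrix.mul_apply, Fin.sum_univ_two, Matrix.toBlocks₂₂,
          Matrix.toBlocks₂₁, Matrix.toBlocks₁₂, Matrix.of_apply, hN, Matrix.submatrix_apply]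
        rw [hs (e (Sum.inr i)) (e (Sum.inr j)), hs (e (Sum.inl 0)) (e (Sum.inr j)),
          hs (e (Sum.inl 1)) (e (Sum.inr j)), hs (e (Sum.inl 0)) (e (Sum.inr i)),
          hs (e (Sum.inl 1)) (e (Sum.inr i))]
        simp
        ring) (by
        intro i
        simp only [Matrix.sub_apply, Matrix.mul_apply, Fin.sum_univ_two, Matrix.toBlocks₂₂,
          Matrix.toBlocks₂₁, Matrix.toBlocks₁₂, Matrix.of_apply, hN, Matrix.submatrix_apply]
        rw [hd, hs (e (Sum.inl 0)) (e (Sum.inr i)),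
          hs (e (Sum.inl 1)) (e (Sum.inr i))]
        simp
        ring)
    refine ⟨c * p, ?_⟩
    rw [key, hp, Matrix.det_fin_two]
    simp
    ring
  · push Not at hM
    have h0 : M = 0 := by
      ext i j
      exact hM i j
    rcases isEmpty_or_nonempty ι with h | h
    · exact ⟨1, by simp⟩
    · exact ⟨0, by rw [h0, Matrix.det_zero]; simp⟩

theorem alt_det_isSquare {R : Type*} [CommRing R] [IsDomain R] [IsIntegrallyClosed R]
    {ι : Type*} [Fintype ι] [DecidableEq ι]
    (M : Matrix ι ι R) (hs : ∀ i j, M i j = - M j i) (hd : ∀ i, M i i = 0) :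
    ∃ p, M.det = p ^ 2 := by
  let e := (Fintype.equivFin ι).symm
  obtain ⟨p, hp⟩ := alt_det_isSquare_field (K := FractionRing R) _
    (((algebraMap R (FractionRing R)).mapMatrix M).submatrix e e) rfl
    (by intro i j; simp [hs (e i) (e j)]) (by intro i; simp [hd])
  rw [Matrix.det_submatrix_equiv_self, ← RingHom.map_det] at hp
  have hint : IsIntegral R p := by
    refine IsIntegral.of_pow (n := 2) (by norm_num) ?_
    rw [← hp]
    exact isIntegral_algebraMap
  obtain ⟨r, rfl⟩ := IsIntegrallyClosed.isIntegral_iff.mp hint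
  refine ⟨r, IsFractionRing.injective R (FractionRing R) ?_⟩
  rw [hp, map_pow]

/-- Generic variables: entries between `T` and `Fin q`, and pairs `i < j` in `Fin q`. -/
abbrev GVar {V : Type*} (T : Finset V) (q : ℕ) : Type _ :=
  (↥T × Fin q) ⊕ (Σ j : Fin q, Fin j.val)

theorem card_GVar {V : Type*} (T : Finset V) (q : ℕ) :
    Fintype.card (GVar T q) = T.card * q + q * (q - 1) / 2 := by
  simp [GVar, Fintype.card_sum, Fintype.card_prod, Fintype.card_sigma]
  rw [Fin.sum_univ_eq_sum_range (fun i => i), Finset.sum_range_id]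

/-- The generic matrix. -/
noncomputable def gmat {V F : Type*} [Field F] (A : Matrix V V F) {X T : Finset V} (h : X ⊆ T)
    (q : ℕ) : Matrix (↥X ⊕ Fin q) (↥X ⊕ Fin q) (MvPolynomial (GVar T q) F)
  | Sum.inl x, Sum.inl y => MvPolynomial.C (A x y)
  | Sum.inl x, Sum.inr j => MvPolynomial.X (Sum.inl (⟨x, h x.2⟩, j))
  | Sum.inr j, Sum.inl x => - MvPolynomial.X (Sum.inl (⟨x, h x.2⟩, j))
  | Sum.inr i, Sum.inr j =>
    if hij : i < j then MvPolynomial.X (Sum.inr ⟨j, ⟨i.val, hij⟩⟩)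
    else if hji : j < i then - MvPolynomial.X (Sum.inr ⟨i, ⟨j.val, hji⟩⟩)
    else 0

/-- The evaluation point attached to `Y` enumerated by `e`. -/
def gpt {V F : Type*} (A : Matrix V V F) (T : Finset V) {q : ℕ} (e : Fin q → V) :
    GVar T q → F
  | Sum.inl (x, j) => A x (e j)
  | Sum.inr ⟨j, i⟩ => A (e ⟨i.val, i.2.trans j.2⟩) (e j)

theorem gmat_eval {V F : Type*} [DecidableEq V] [Field F] (A : Matrix V V F)
    (hs : ∀ u v, A u v = - A v u) (hd : ∀ v, A v v = 0) {X T : Finset V} (h : X ⊆ T)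
    {q : ℕ} (e : Fin q → V) :
    (MvPolynomial.eval (gpt A T e)).mapMatrix (gmat A h q) =
      A.submatrix (Sum.elim (fun x : ↥X => (x : V)) e) (Sum.elim (fun x : ↥X => (x : V)) e) := by
  ext (i | i) (j | j)
  · simp [gmat]
  · simp [gmat, gpt]
  · simp [gmat, gpt, hs (e i) j]
  · rcases lt_trichotomy i j with hij | hij | hij
    · simp [gmat, gpt, hij]
    · subst hij
      simp [gmat, hd]
    · simp [gmat, gpt, hij, hij.not_gt, hs (e i) (e j)]

theorem gmat_deg {V F : Type*} [Field F] (A : Matrix V V F) {X T : Finset V} (h : X ⊆ T)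
    (q : ℕ) : ∀ i j, (gmat A h q i j).totalDegree ≤ Sum.elim (fun _ => 0) (fun _ => 1) i +
      Sum.elim (fun _ => 0) (fun _ => 1) j := by
  rintro (i | i) (j | j)
  · simp [gmat]
  · simp [gmat]
  · simp [gmat]
  · simp only [gmat]
    split_ifs <;> simp

theorem gmat_det_deg {V F : Type*} [DecidableEq V] [Field F] (A : Matrix V V F) {X T : Finset V}
    (h : X ⊆ T) (q : ℕ) : (gmat A h q).det.totalDegree ≤ 2 * q := by
  rw [Matrix.det_apply]
  refine MvPolynomial.totalDegree_finsetSum_le ?_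
  intro σ _
  have h1 : (∏ i, gmat A h q (σ i) i).totalDegree ≤ 2 * q := by
    refine (MvPolynomial.totalDegree_finsetProd _ _).trans ?_
    refine (Finset.sum_le_sum (fun i _ => gmat_deg A h q (σ i) i)).trans ?_
    rw [Finset.sum_add_distrib,
      Equiv.sum_comp σ (Sum.elim (fun _ : ↥X => 0) (fun _ : Fin q => 1))]
    simp
    omega
  rcases Int.units_eq_one_or (Equiv.Perm.sign σ) with hσ | hσ
  · simpa [hσ] using h1
  · simpa [hσ, Units.neg_smul] using h1

theorem exists_poly {V F : Type*} [DecidableEq V] [Field F] (A : Matrix V V F)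
    (hs : ∀ u v, A u v = - A v u) (hd : ∀ v, A v v = 0) {X T : Finset V} (h : X ⊆ T)
    (q : ℕ) : ∃ p : MvPolynomial (GVar T q) F, p.totalDegree ≤ q ∧
      ∀ e : Fin q → V, (MvPolynomial.eval (gpt A T e) p) ^ 2 =
       (A.submatrix (Sum.elim (fun x : ↥X => (x : V)) e) (Sum.elim (fun x : ↥X => (x : V)) e)).det := by
  obtain ⟨p, hp⟩ := alt_det_isSquare (gmat A h q) (by
    rintro (i | i) (j | j)
    · simp only [gmat]
      rw [hs i j, map_neg]
    · simp [gmat]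
    · simp [gmat]
    · rcases lt_trichotomy i j with hij | hij | hij
      · simp [gmat, hij, hij.not_gt]
      · subst hij
        simp [gmat]
      · simp [gmat, hij, hij.not_gt]) (by
    rintro (i | i)
    · simp [gmat, hd]
    · simp [gmat])
  refine ⟨p, ?_, ?_⟩
  · have h1 := gmat_det_deg A h q
    rw [hp] at h1
    by_cases h0 : p = 0
    · simp [h0]
    · rw [pow_two, MvPolynomial.totalDegree_mul_of_isDomain h0 h0] at h1
      omega
  · intro e
    rw [← gmat_eval A hs hd h e, ← RingHom.map_det, hp, map_pow]

theorem extendsIn_iff {V F : Type*} [DecidableEq V] [Field F] (A : Matrix V V F)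
    (X Y : Finset V) {q : ℕ} (e : Fin q ≃ ↥Y) :
    ExtendsIn A X Y ↔ (A.submatrix (Sum.elim (fun x : ↥X => (x : V)) (fun i => (e i : V)))
      (Sum.elim (fun x : ↥X => (x : V)) (fun i => (e i : V)))).det ≠ 0 := by
  by_cases hXY : X ∩ Y = ∅
  · have hdis : ∀ a ∈ X, a ∉ Y := by
      intro a ha hb
      have : a ∈ X ∩ Y := Finset.mem_inter.2 ⟨ha, hb⟩
      simp [hXY] at this
    let f : ↥X ⊕ Fin q → ↥(X ∪ Y) := Sum.elim (fun x => ⟨x, Finset.mem_union_left _ x.2⟩)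
      (fun i => ⟨e i, Finset.mem_union_right _ (e i).2⟩)
    have hf : Function.Bijective f := by
      constructor
      · rintro (⟨i, hi⟩ | i) (⟨j, hj⟩ | j) hij
        · simpa [f] using hij
        · simp only [f, Sum.elim_inl, Sum.elim_inr, Subtype.mk.injEq] at hij
          exact absurd (hij ▸ (e j).2) (hdis _ hi)
        · simp only [f, Sum.elim_inl, Sum.elim_inr, Subtype.mk.injEq] at hij
          exact absurd (hij ▸ (e i).2) (hdis _ hj)
        · simp only [f, Sum.elim_inr, Subtype.mk.injEq] at hij
          rw [e.injective (Subtype.ext hij)]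
      · rintro ⟨x, hx⟩
        rcases Finset.mem_union.1 hx with h | h
        · exact ⟨Sum.inl ⟨x, h⟩, rfl⟩
        · exact ⟨Sum.inr (e.symm ⟨x, h⟩), by simp [f]⟩
    have : A.submatrix (Sum.elim (fun x : ↥X => (x : V)) (fun i => (e i : V)))
      (Sum.elim (fun x : ↥X => (x : V)) (fun i => (e i : V))) =
        (principalSub A (X ∪ Y)).submatrix (Equiv.ofBijective f hf) (Equiv.ofBijective f hf) := by
      ext (i | i) (j | j) <;> simp [principalSub, f]
    rw [this, Matrix.det_submatrix_equiv_self]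
    simp [ExtendsIn, hXY]
  · obtain ⟨a, ha⟩ := Finset.nonempty_iff_ne_empty.2 hXY
    obtain ⟨h1, h2⟩ := Finset.mem_inter.1 ha
    have : (A.submatrix (Sum.elim (fun x : ↥X => (x : V)) (fun i => (e i : V)))
      (Sum.elim (fun x : ↥X => (x : V)) (fun i => (e i : V)))).det = 0 := by
      refine Matrix.det_zero_of_row_eq (i := Sum.inl ⟨a, h1⟩) (j := Sum.inr (e.symm ⟨a, h2⟩))
        (by simp) ?_
      ext j
      simp
    simp [ExtendsIn, hXY, this]

/-- The vector of homogenized monomials of degree `q`. -/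
def mvec {F σ : Type*} [Field F] [DecidableEq σ] (q : ℕ) (z : σ → F) : Sym (Option σ) q → F :=
  fun s => ((s : Multiset (Option σ)).map (fun o => o.elim 1 z)).prod

theorem exists_functional {F σ : Type*} [Field F] [DecidableEq σ] (q : ℕ)
    (p : MvPolynomial σ F) (hp : p.totalDegree ≤ q) :
    ∃ φ : (Sym (Option σ) q → F) →ₗ[F] F, ∀ z, φ (mvec q z) = MvPolynomial.eval z p := by
  have hex : ∀ m : σ →₀ ℕ, m ∈ p.support → ∃ s : Sym (Option σ) q, ∀ z : σ → F,
      mvec q z s = m.prod (fun n e => z n ^ e) := by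
    intro m hm
    have hdeg : Multiset.card (Finsupp.toMultiset m) ≤ q := by
      rw [Finsupp.card_toMultiset]
      exact (MvPolynomial.le_totalDegree hm).trans hp
    refine ⟨⟨(Finsupp.toMultiset m).map some +
      Multiset.replicate (q - Multiset.card (Finsupp.toMultiset m)) none, ?_⟩, ?_⟩
    · rw [Multiset.card_add, Multiset.card_map, Multiset.card_replicate]
      omega
    · intro z
      simp only [mvec, Sym.coe_mk, Multiset.map_add, Multiset.prod_add, Multiset.map_map,
        Multiset.map_replicate, Multiset.prod_replicate]
      simp only [Option.elim_none, one_pow, mul_one, Function.comp_def, Option.elim_some]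
      change (Multiset.map z _).prod = _
      rw [Finsupp.toMultiset_map, Finsupp.prod_toMultiset,
        Finsupp.prod_mapDomain_index (by simp) (by intros; rw [pow_add])]
  choose! s hs using hex
  refine ⟨∑ m ∈ p.support, p.coeff m • LinearMap.proj (s m), ?_⟩
  intro z
  rw [MvPolynomial.eval_eq, LinearMap.sum_apply]
  refine Finset.sum_congr rfl fun m hm => ?_
  simp only [LinearMap.smul_apply, LinearMap.proj_apply, smul_eq_mul]
  rw [hs m hm]
  rfl

theorem exists_span_subset {F α ι : Type*} [Field F] [Fintype ι] [DecidableEq α]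
    (S : Finset α) (w : α → ι → F) : ∃ S' ⊆ S, S'.card ≤ Fintype.card ι ∧
      ∀ y ∈ S, w y ∈ Submodule.span F (w '' (S' : Set α)) := by
  obtain ⟨b, hbS, -, hspan, hb⟩ := exists_linearIndepOn_extension
    (K := F) (v := w) (s := ∅) (t := (S : Set α)) (linearIndepOn_empty F w) (Set.empty_subset _)
  have hfin : b.Finite := S.finite_toSet.subset hbS
  refine ⟨hfin.toFinset, by simpa using hbS, ?_, ?_⟩
  · have hli : LinearIndependent F (fun x : b => w x) := hb
    have := hfin.fintype
    have := hli.fintype_card_le_finrank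
    rw [Module.finrank_fintype_fun_eq_card] at this
    rwa [hfin.card_toFinset]
  · intro y hy
    have := hspan ⟨y, hy, rfl⟩
    simpa using this

/-- Delta-matroid representative sets, cardinality version.
Let `A` be a skew-symmetric matrix over a field `F` indexed by a finite set `V`,
`T ⊆ V` with `|T| = k`, and `𝒮` a family of `q`-element subsets of `V`. Then there
exists `𝒮' ⊆ 𝒮` with `|𝒮'| ≤ C(k·q + q·(q−1)/2 + q, q)` such that for every `X ⊆ T`:
if some `Y ∈ 𝒮` extends `X` w.r.t. `A`, then some `Y' ∈ 𝒮'` extends `X` w.r.t. `A`. -/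
theorem stmt_5 {F : Type*} [Field F] {V : Type*} [Fintype V] [DecidableEq V]
    (A : Matrix V V F) (hskew : ∀ u v, A u v = - A v u) (hdiag : ∀ v, A v v = 0)
    (T : Finset V) (k q : ℕ) (hT : T.card = k)
    (𝒮 : Finset (Finset V)) (h𝒮 : ∀ Y ∈ 𝒮, Y.card = q) :
    ∃ 𝒮' ⊆ 𝒮, 𝒮'.card ≤ (k * q + q * (q - 1) / 2 + q).choose q ∧
      ∀ X ⊆ T, (∃ Y ∈ 𝒮, ExtendsIn A X Y) → ∃ Y' ∈ 𝒮', ExtendsIn A X Y' := by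
  classical
  have henum : ∀ Y : Finset V, Y ∈ 𝒮 → ∃ f : Fin q → V, ∃ e : Fin q ≃ ↥Y, ∀ i, f i = (e i : V) := by
    intro Y hY
    exact ⟨_, (Y.equivFinOfCardEq (h𝒮 Y hY)).symm, fun i => rfl⟩
  rcases 𝒮.eq_empty_or_nonempty with h0 | ⟨Y0, hY0⟩
  · subst h0
    exact ⟨∅, by simp, by simp, by simp⟩
  haveI : Nonempty (Fin q → V) := ⟨(henum Y0 hY0).choose⟩
  choose! en hen using henum
  obtain ⟨S', hS', hcard, hspan⟩ := exists_span_subset 𝒮 (fun Y => mvec q (gpt A T (en Y)))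
  refine ⟨S', hS', ?_, ?_⟩
  · refine hcard.trans (le_of_eq ?_)
    rw [Sym.card_sym_eq_choose, Fintype.card_option, card_GVar, hT]
    congr 1
    omega
  · rintro X hX ⟨Y, hY, hext⟩
    obtain ⟨p, hpd, hp⟩ := exists_poly A hskew hdiag hX q
    obtain ⟨φ, hφ⟩ := exists_functional q p hpd
    have hiff : ∀ Z ∈ 𝒮, (ExtendsIn A X Z ↔ φ (mvec q (gpt A T (en Z))) ≠ 0) := by
      intro Z hZ
      obtain ⟨e, he⟩ := hen Z hZ
      have he' : en Z = fun i => (e i : V) := funext he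
      rw [extendsIn_iff A X Z e, hφ, ← he', ← hp]
      exact pow_ne_zero_iff (by norm_num)
    by_contra hcon
    push Not at hcon
    refine (hiff Y hY).1 hext ?_
    have hle : Submodule.span F ((fun Y => mvec q (gpt A T (en Y))) '' (S' : Set (Finset V))) ≤
        LinearMap.ker φ := by
      rw [Submodule.span_le]
      rintro _ ⟨Z, hZ, rfl⟩
      have hZ' : Z ∈ S' := hZ
      by_contra hne
      exact hcon Z hZ' ((hiff Z (hS' hZ')).2 hne)
    exact hle (hspan Y hY)
end

section
/- Let F be a field, V a finite set, A a skew-symmetric matrix over F indexed by V, and T ⊆ V. Then the rank of the V × T submatrix A[·,T] (the columns of A indexed by T) equals the maximum of |S ∩ T| over all S ⊆ V such that the principal submatrix A[S] is nonsingular. -/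
theorem aux_upper {F : Type*} [Field F] {V : Type*} [Fintype V] [DecidableEq V]
    (A : Matrix V V F) (T S : Finset V) (hS : (principalSub A S).det ≠ 0) :
    (S ∩ T).card ≤ (A.submatrix id (fun t : ↥T => (t : V))).rank := by
  have hind : LinearIndepOn F (fun v i => A i v) (S : Set V) := by
    rw [linearIndepOn_finset_iff]
    intro f hf
    have h0 : (fun s : S => f s) = 0 := by
      refine Matrix.eq_zero_of_mulVec_eq_zero hS ?_
      ext s
      have h1 := congrFun hf (s : V)
      simp only [Finset.sum_apply, Pi.smul_apply, smul_eq_mul, Pi.zero_apply] at h1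
      rw [← Finset.sum_coe_sort] at h1
      simp only [Matrix.mulVec, dotProduct, principalSub, Matrix.submatrix_apply, Pi.zero_apply]
      rw [← h1]
      exact Finset.sum_congr rfl fun x _ => mul_comm _ _
    intro i hi
    exact congrFun h0 ⟨i, hi⟩
  have hind2 : LinearIndepOn F (fun v i => A i v) ((S ∩ T : Finset V) : Set V) :=
    hind.mono (by simp)
  have hc := finrank_span_eq_card (R := F) hind2
  rw [Matrix.rank_eq_finrank_span_cols]
  have : (S ∩ T).card = Fintype.card ((S ∩ T : Finset V) : Set V) := (Fintype.card_coe _).symm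
  rw [this, ← hc]
  apply Submodule.finrank_mono
  apply Submodule.span_mono
  rintro _ ⟨⟨v, hv⟩, rfl⟩
  have hv' : v ∈ T := by simp at hv; exact hv.2
  exact ⟨⟨v, hv'⟩, rfl⟩

theorem aux_lower {F : Type*} [Field F] {V : Type*} [Fintype V] [DecidableEq V]
    (A : Matrix V V F) (hskew : ∀ u v, A u v = - A v u) (T : Finset V) :
    ∃ S : Finset V, (principalSub A S).det ≠ 0 ∧
        (A.submatrix id (fun t : ↥T => (t : V))).rank ≤ (S ∩ T).card := by
  classical
  obtain ⟨B₀, hBT, -, hspan₀, hind₀⟩ := exists_linearIndepOn_extension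
    (K := F) (v := fun v i => A i v) (linearIndepOn_empty F _) (Set.empty_subset (T : Set V))
  obtain ⟨B, -, hBB, hspan, hind⟩ := exists_linearIndepOn_extension hind₀ (Set.subset_univ B₀)
  lift B to Finset V using Set.toFinite B
  lift B₀ to Finset V using Set.toFinite B₀
  refine ⟨B, ?_, ?_⟩
  · intro hdet
    obtain ⟨x, hx, hAx⟩ := Matrix.exists_mulVec_eq_zero_iff.mpr hdet
    apply hx
    have hz : ∀ v : V, ∑ s : B, A v s * x s = 0 := by
      intro v
      have hv := hspan ⟨v, Set.mem_univ v, rfl⟩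
      obtain ⟨c, hc⟩ := Submodule.mem_span_image_finset_iff_exists_fun F |>.mp hv
      have hrow : ∀ u, A v u = ∑ b : B, c b * A b u := by
        intro u
        have := congrFun hc u
        simp only [Finset.sum_apply, Pi.smul_apply, smul_eq_mul] at this
        rw [hskew v u, ← this, ← Finset.sum_neg_distrib]
        refine Finset.sum_congr rfl fun b _ => ?_
        rw [hskew u b]; ring
      simp_rw [hrow, Finset.sum_mul]
      rw [Finset.sum_comm]
      refine Finset.sum_eq_zero fun b _ => ?_
      have := congrFun hAx b
      simp only [Matrix.mulVec, dotProduct, principalSub, Matrix.submatrix_apply,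
        Pi.zero_apply] at this
      simp_rw [mul_assoc]
      rw [← Finset.mul_sum, this, mul_zero]
    have hli := Fintype.linearIndependent_iff.mp hind x (by
      ext v
      simp only [Finset.sum_apply, Pi.smul_apply, smul_eq_mul, Pi.zero_apply]
      rw [← hz v]
      exact Finset.sum_congr rfl fun b _ => mul_comm _ _)
    exact funext hli
  · have h1 : B₀ ⊆ B ∩ T := Finset.subset_inter (by exact_mod_cast hBB) (by exact_mod_cast hBT)
    refine le_trans ?_ (Finset.card_le_card h1)
    have hc := finrank_span_eq_card (R := F) hind₀
    have : B₀.card = Fintype.card (B₀ : Set V) := by simp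
    rw [this, ← hc, Matrix.rank_eq_finrank_span_cols]
    apply Submodule.finrank_mono
    rw [Submodule.span_le, ← Set.image_eq_range (fun v i => A i v)]
    rintro _ ⟨⟨v, hv⟩, rfl⟩
    exact hspan₀ ⟨v, hv, rfl⟩

/-- Rank of a column set of a skew-symmetric matrix.
Let `A` be a skew-symmetric matrix over a field `F` indexed by a finite set `V` and
`T ⊆ V`. Then the rank of the `V × T` submatrix `A[·,T]` equals the maximum of
`|S ∩ T|` over all `S ⊆ V` with `A[S]` nonsingular: the maximum is attained, and every
such `S` satisfies the corresponding upper bound. -/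
theorem stmt_7 {F : Type*} [Field F] {V : Type*} [Fintype V] [DecidableEq V]
    (A : Matrix V V F) (hskew : ∀ u v, A u v = - A v u) (hdiag : ∀ v, A v v = 0)
    (T : Finset V) :
    (∃ S : Finset V, (principalSub A S).det ≠ 0 ∧
        (S ∩ T).card = (A.submatrix id (fun t : ↥T => (t : V))).rank) ∧
    ∀ S : Finset V, (principalSub A S).det ≠ 0 →
        (S ∩ T).card ≤ (A.submatrix id (fun t : ↥T => (t : V))).rank := by
  have hup := aux_upper A T
  obtain ⟨S, hS, hle⟩ := aux_lower A hskew T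
  exact ⟨⟨S, hS, le_antisymm (hup S hS) hle⟩, hup⟩
end

section
/- Let F be a field, V a finite set, and A a skew-symmetric matrix over F indexed by V. Let V⁺ = {v⁺ : v ∈ V} be a disjoint copy of V, and define a matrix A' indexed by V ∪ V⁺ by A'[u,v] = A'[u⁺,v] = A'[u,v⁺] = A'[u⁺,v⁺] = A[u,v] for all u, v ∈ V. Then A' is skew-symmetric, and for all X, Y ⊆ V: the principal submatrix A'[X ∪ Y⁺] is nonsingular (where Y⁺ = {v⁺ : v ∈ Y}) if and only if X ∩ Y = ∅ and A[X ∪ Y] is nonsingular. -/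
/-- The matrix `A'` indexed by `V ∪ V⁺` (a disjoint copy of `V`), all four of whose
blocks are copies of `A`: `A'[u,v] = A'[u⁺,v] = A'[u,v⁺] = A'[u⁺,v⁺] = A[u,v]`. -/
def doubledMatrix {V F : Type*} (A : Matrix V V F) : Matrix (V ⊕ V) (V ⊕ V) F :=
  A.submatrix (Sum.elim id id) (Sum.elim id id)

/-- Eliminating overlaps by duplicating ground-set elements.
Let `A` be skew-symmetric over `F`, indexed by `V`, and let `A'` be the doubled matrix
indexed by `V ⊕ V`. Then `A'` is skew-symmetric, and for all `X, Y ⊆ V`, the principal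
submatrix `A'[X ∪ Y⁺]` is nonsingular iff `X ∩ Y = ∅` and `A[X ∪ Y]` is nonsingular. -/
theorem stmt_8 {F : Type*} [Field F] {V : Type*} [Fintype V] [DecidableEq V]
    (A : Matrix V V F) (hskew : ∀ u v, A u v = - A v u) (hdiag : ∀ v, A v v = 0) :
    (∀ x y : V ⊕ V, doubledMatrix A x y = - doubledMatrix A y x) ∧
    (∀ x : V ⊕ V, doubledMatrix A x x = 0) ∧
    ∀ X Y : Finset V,
      ((principalSub (doubledMatrix A) (X.image Sum.inl ∪ Y.image Sum.inr)).det ≠ 0 ↔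
        X ∩ Y = ∅ ∧ (principalSub A (X ∪ Y)).det ≠ 0) := by
  refine ⟨fun x y => hskew _ _, fun x => hdiag _, fun X Y => ?_⟩
  by_cases hXY : X ∩ Y = ∅
  · have hdis : ∀ a, a ∈ X → a ∈ Y → False := fun a h1 h2 => by
      have : a ∈ X ∩ Y := Finset.mem_inter.2 ⟨h1, h2⟩
      simp [hXY] at this
    let f : ↥(X.image (Sum.inl : V → V ⊕ V) ∪ Y.image Sum.inr) → ↥(X ∪ Y) := fun x =>
      ⟨Sum.elim id id x.1, by
        obtain ⟨x, hx⟩ := x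
        rcases x with a | a <;> simp at hx <;> simp [hx]⟩
    have hf : Function.Bijective f := by
      constructor
      · rintro ⟨x, hx⟩ ⟨y, hy⟩ h
        have h' : Sum.elim id id x = Sum.elim id id y := congrArg Subtype.val h
        rcases x with a | a <;> rcases y with b | b <;> simp at hx hy h' <;> subst h'
        · rfl
        · exact (hdis _ hx hy).elim
        · exact (hdis _ hy hx).elim
        · rfl
      · rintro ⟨a, ha⟩
        rcases Finset.mem_union.1 ha with h | h
        · exact ⟨⟨Sum.inl a, by simp [h]⟩, rfl⟩
        · exact ⟨⟨Sum.inr a, by simp [h]⟩, rfl⟩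
    have key : principalSub (doubledMatrix A) (X.image Sum.inl ∪ Y.image Sum.inr) =
        (principalSub A (X ∪ Y)).submatrix (Equiv.ofBijective f hf) (Equiv.ofBijective f hf) := by
      ext i j
      rfl
    rw [key, Matrix.det_submatrix_equiv_self]
    simp [hXY]
  · simp only [hXY, false_and, iff_false, not_not]
    obtain ⟨a, ha⟩ := Finset.nonempty_iff_ne_empty.2 hXY
    rw [Finset.mem_inter] at ha
    refine Matrix.det_zero_of_row_eq (i := ⟨Sum.inl a, by simp [ha.1]⟩)
      (j := ⟨Sum.inr a, by simp [ha.2]⟩) (by simp) ?_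
    ext j
    rfl
end

section
/- Let F be a field, V a finite set, A a skew-symmetric matrix over F indexed by V, and T ⊆ V. Let k be the maximum of |S ∩ T| over all S ⊆ V with A[S] nonsingular, and let B ⊆ V be minimal under inclusion among sets satisfying: A[B] is nonsingular and |B ∩ T| = k. Then: (i) |B| ≤ 2k; (ii) for all distinct u, v ∈ B ∖ T, the principal submatrix A[B ∖ {u,v}] is singular; and (iii) for all u ∈ T ∖ B and v ∈ V ∖ B with u ≠ v, the principal submatrix A[B ∪ {u,v}] is singular. -/
theorem aux_alt {n F : Type*} [Fintype n] [Field F] (M : Matrix n n F)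
    (hs : ∀ u v, M u v = - M v u) (hd : ∀ v, M v v = 0) (y : n → F) :
    ∑ i, ∑ j, y i * (M i j * y j) = 0 := by
  classical
  rw [← Fintype.sum_prod_type']
  refine Finset.sum_involution (fun p _ => (p.2, p.1)) ?_ ?_ ?_ ?_
  · rintro ⟨i, j⟩ _
    simp only
    rw [hs i j]; ring
  · rintro ⟨i, j⟩ _ h h'
    simp only [Prod.mk.injEq] at h'
    apply h
    simp only
    rw [h'.1, hd]; ring
  · simp
  · simp

theorem aux_inv_diag {n F : Type*} [Fintype n] [DecidableEq n] [Field F] (M : Matrix n n F)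
    (hs : ∀ u v, M u v = - M v u) (hd : ∀ v, M v v = 0) (hM : M.det ≠ 0) (u : n) :
    M⁻¹ u u = 0 := by
  have hMC : M * M⁻¹ = 1 := Matrix.mul_nonsing_inv M (isUnit_iff_ne_zero.mpr hM)
  have h := aux_alt M hs hd (fun i => M⁻¹ i u)
  have h2 : ∀ i, ∑ j, M⁻¹ i u * (M i j * M⁻¹ j u) = if i = u then M⁻¹ i u else 0 := by
    intro i
    rw [← Finset.mul_sum, ← Matrix.mul_apply, hMC, Matrix.one_apply]
    simp
  simp only [h2] at h
  simpa using h

theorem aux_block {n F : Type*} [Fintype n] [DecidableEq n] [Field F] (C : Matrix n n F)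
    (hC : C.det ≠ 0) (p : n → Prop) [DecidablePred p]
    (h : ∀ u v, ¬ p u → ¬ p v → C u v = 0) :
    Fintype.card {b // ¬ p b} ≤ Fintype.card {b // p b} := by
  let N : Matrix {b // p b} {b // ¬ p b} F := C.submatrix (fun x => x.1) (fun x => x.1)
  have hinj : Function.Injective N.mulVecLin := by
    rw [injective_iff_map_eq_zero]
    intro a ha
    let a' : n → F := fun b => if hb : ¬ p b then a ⟨b, hb⟩ else 0
    have key : C.mulVec a' = 0 := by
      funext i
      have e : C.mulVec a' i = ∑ j : {b // ¬ p b}, C i j.1 * a j := by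
        simp only [Matrix.mulVec, dotProduct]
        rw [← Fintype.sum_subtype_add_sum_subtype (fun b => ¬ p b)]
        rw [add_eq_left.mpr]
        · refine Finset.sum_congr rfl fun j _ => ?_
          simp only [a']
          rw [dif_pos j.2]
        · refine Finset.sum_eq_zero fun j _ => ?_
          simp only [a']
          rw [dif_neg j.2, mul_zero]
      rw [e]
      by_cases hi : p i
      · exact congrFun ha ⟨i, hi⟩
      · refine Finset.sum_eq_zero fun j _ => ?_
        rw [h i j.1 hi j.2, zero_mul]
    have h0 := Matrix.eq_zero_of_mulVec_eq_zero hC key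
    funext j
    have := congrFun h0 j.1
    simp only [a'] at this
    rw [dif_pos j.2] at this
    exact this
  simpa using LinearMap.finrank_le_finrank_of_injective hinj

theorem aux_pair {F V : Type*} [Field F] [DecidableEq V]
    (A : Matrix V V F) (hskew : ∀ u v, A u v = - A v u) (hdiag : ∀ v, A v v = 0)
    (B : Finset V) (hB : (principalSub A B).det ≠ 0) (u v : ↥B)
    (h : (principalSub A (B \ {u.1, v.1})).det = 0) : (principalSub A B)⁻¹ u v = 0 := by
  have hs : ∀ i j, principalSub A B i j = - principalSub A B j i := fun i j => hskew i j
  have hd : ∀ i, principalSub A B i i = 0 := fun i => hdiag i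
  have hu := aux_inv_diag _ hs hd hB
  by_cases huv : u = v
  · subst huv; exact hu u
  by_contra hC
  have hBu := isUnit_iff_ne_zero.mpr hB
  have hsT : (principalSub A B).transpose = - principalSub A B := by
    ext i j; exact hs j i
  have hC' : (principalSub A B)⁻¹ v u ≠ 0 := by
    intro h0
    have h1 : ((principalSub A B)⁻¹).transpose = - (principalSub A B)⁻¹ := by
      rw [Matrix.transpose_nonsing_inv, hsT]
      apply Matrix.inv_eq_left_inv
      simp [Matrix.nonsing_inv_mul _ hBu]
    have h2 := congrFun (congrFun h1 u) v
    simp only [Matrix.transpose_apply, Matrix.neg_apply, h0] at h2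
    exact hC (neg_eq_zero.mp h2.symm)
  obtain ⟨x, hx0, hx⟩ := Matrix.exists_mulVec_eq_zero_iff.mpr h
  let z : V → F := fun b => if hb : b ∈ B \ {u.1, v.1} then x ⟨b, hb⟩ else 0
  let y : ↥B → F := fun b => z b
  have hyu : y u = 0 := by simp [y, z]
  have hyv : y v = 0 := by simp [y, z]
  have hw : ∀ i : ↥B, i ≠ u → i ≠ v → (principalSub A B).mulVec y i = 0 := by
    intro i hiu hiv
    have hi : i.1 ∈ B \ {u.1, v.1} := by
      simp [Subtype.val_inj, hiu, hiv]
    refine Eq.trans ?_ (congrFun hx ⟨i.1, hi⟩)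
    simp only [Matrix.mulVec, dotProduct, principalSub, Matrix.submatrix_apply, y]
    rw [Finset.sum_coe_sort B (fun j => A i.1 j * z j),
      ← Finset.sum_subset (Finset.sdiff_subset (s := B) (t := {u.1, v.1})),
      ← Finset.sum_coe_sort]
    · refine Finset.sum_congr rfl fun j _ => ?_
      simp only [z]
      rw [dif_pos j.2]
    · intro j _ hj
      simp only [z]
      rw [dif_neg hj, mul_zero]
  set w := (principalSub A B).mulVec y with hwdef
  have hyw : y = (principalSub A B)⁻¹.mulVec w := by
    rw [hwdef, Matrix.mulVec_mulVec, Matrix.nonsing_inv_mul _ hBu, Matrix.one_mulVec]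
  have hexp : ∀ i, y i = (principalSub A B)⁻¹ i u * w u + (principalSub A B)⁻¹ i v * w v := by
    intro i
    conv_lhs => rw [hyw]
    simp only [Matrix.mulVec, dotProduct]
    rw [← Finset.sum_subset (Finset.subset_univ {u, v}), Finset.sum_pair huv]
    intro j _ hj
    simp only [Finset.mem_insert, Finset.mem_singleton, not_or] at hj
    rw [hw j hj.1 hj.2, mul_zero]
  have e1 := hexp u
  have e2 := hexp v
  rw [hyu, hu, zero_mul, zero_add] at e1
  rw [hyv, hu, zero_mul, add_zero] at e2
  have wv : w v = 0 := (mul_eq_zero.mp e1.symm).resolve_left hC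
  have wu : w u = 0 := (mul_eq_zero.mp e2.symm).resolve_left hC'
  apply hx0
  funext j
  have hj := hexp ⟨j.1, (Finset.mem_sdiff.mp j.2).1⟩
  rw [wu, wv, mul_zero, mul_zero, add_zero] at hj
  simp only [y, z] at hj
  rw [dif_pos j.2] at hj
  exact hj

/-- Structure after pivoting on a minimal max-intersection feasible set.
Let `A` be skew-symmetric over `F` indexed by `V`, `T ⊆ V`, `k` the maximum of `|S ∩ T|`
over `S` with `A[S]` nonsingular, and `B` minimal under inclusion with `A[B]`
nonsingular and `|B ∩ T| = k`. Then (i) `|B| ≤ 2k`; (ii) for distinct `u, v ∈ B ∖ T`,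
`A[B ∖ {u,v}]` is singular; (iii) for `u ∈ T ∖ B`, `v ∈ V ∖ B`, `u ≠ v`,
`A[B ∪ {u,v}]` is singular. -/
theorem stmt_9 {F : Type*} [Field F] {V : Type*} [Fintype V] [DecidableEq V]
    (A : Matrix V V F) (hskew : ∀ u v, A u v = - A v u) (hdiag : ∀ v, A v v = 0)
    (T : Finset V) (k : ℕ)
    (hmax : ∀ S : Finset V, (principalSub A S).det ≠ 0 → (S ∩ T).card ≤ k)
    (hex : ∃ S : Finset V, (principalSub A S).det ≠ 0 ∧ (S ∩ T).card = k)
    (B : Finset V) (hB : (principalSub A B).det ≠ 0) (hBT : (B ∩ T).card = k)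
    (hmin : ∀ B' ⊆ B, (principalSub A B').det ≠ 0 → (B' ∩ T).card = k → B' = B) :
    B.card ≤ 2 * k ∧
    (∀ u ∈ B \ T, ∀ v ∈ B \ T, u ≠ v → (principalSub A (B \ {u, v})).det = 0) ∧
    (∀ u ∈ T \ B, ∀ v : V, v ∉ B → u ≠ v → (principalSub A (B ∪ {u, v})).det = 0) := by
  have h2 : ∀ u ∈ B \ T, ∀ v ∈ B \ T, u ≠ v → (principalSub A (B \ {u, v})).det = 0 := by
    intro u hu v hv _
    rw [Finset.mem_sdiff] at hu hv
    by_contra hne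
    have he : (B \ {u, v}) ∩ T = B ∩ T := by
      ext x
      simp only [Finset.mem_inter, Finset.mem_sdiff, Finset.mem_insert, Finset.mem_singleton]
      constructor
      · tauto
      · rintro ⟨hxB, hxT⟩
        refine ⟨⟨hxB, ?_⟩, hxT⟩
        rintro (rfl | rfl)
        · exact hu.2 hxT
        · exact hv.2 hxT
    have := hmin _ Finset.sdiff_subset hne (by rw [he, hBT])
    have hu' := hu.1
    rw [← this] at hu'
    simp at hu'
  refine ⟨?_, h2, ?_⟩
  · have hblock := aux_block (principalSub A B)⁻¹
      (by
        intro h0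
        have := Matrix.det_nonsing_inv_mul_det _ (isUnit_iff_ne_zero.mpr hB)
        rw [h0, zero_mul] at this
        exact zero_ne_one this)
      (fun b : ↥B => b.1 ∈ T) (by
        intro u v hu hv
        by_cases huv : u = v
        · subst huv
          exact aux_inv_diag (principalSub A B) (fun i j => hskew i j) (fun i => hdiag i) hB u
        · refine aux_pair A hskew hdiag B hB u v (h2 _ ?_ _ ?_ ?_)
          · exact Finset.mem_sdiff.mpr ⟨u.2, hu⟩
          · exact Finset.mem_sdiff.mpr ⟨v.2, hv⟩
          · exact fun h => huv (Subtype.ext h))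
    have hp : Fintype.card {b : ↥B // b.1 ∈ T} ≤ k := by
      rw [← hBT, ← Fintype.card_coe]
      refine Fintype.card_le_of_injective
        (fun b => (⟨b.1.1, Finset.mem_inter.mpr ⟨b.1.2, b.2⟩⟩ : ↥(B ∩ T))) ?_
      intro a b hab
      simp only [Subtype.mk.injEq] at hab
      exact Subtype.ext (Subtype.ext hab)
    have hsum := Fintype.card_subtype_compl (fun b : ↥B => b.1 ∈ T)
    rw [Fintype.card_coe] at hsum
    omega
  · intro u hu v hv huv
    rw [Finset.mem_sdiff] at hu
    by_contra hne
    have h1 := hmax _ hne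
    have h3 : insert u (B ∩ T) ⊆ (B ∪ {u, v}) ∩ T := by
      intro x hx
      simp only [Finset.mem_inter, Finset.mem_union, Finset.mem_insert,
        Finset.mem_singleton] at hx ⊢
      rcases hx with rfl | hx
      · exact ⟨Or.inr (Or.inl rfl), hu.1⟩
      · exact ⟨Or.inl hx.1, hx.2⟩
    have h4 := Finset.card_le_card h3
    rw [Finset.card_insert_of_notMem (fun h => hu.2 (Finset.mem_inter.mp h).1), hBT] at h4
    omega
end

section
/- Let G be a finite simple graph, T ⊆ V(G) a set of terminals, and 𝒯 a partition of T. Let 𝓕 ⊆ 2^T be the family of all Mader matchable subsets of T. Then 𝓕 is nonempty (it contains the empty set) and satisfies the symmetric exchange axiom: for all A, B ∈ 𝓕 and every x ∈ A Δ B, there exists y ∈ A Δ B such that A Δ {x,y} ∈ 𝓕. Hence (T, 𝓕) is a delta-matroid (the Mader delta-matroid). -/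
/-- A Mader path (`𝒯`-path) in `G` with respect to the terminal set `T` and the
partition of `T` induced by the block-labelling `σ`: a path whose endpoints are
terminals lying in distinct blocks, and whose internal vertices avoid `T`. -/
def IsMaderPath {V : Type*} (G : SimpleGraph V) (T : Finset V) (σ : V → ℕ)
    {u v : V} (p : G.Walk u v) : Prop :=
  p.IsPath ∧ u ∈ T ∧ v ∈ T ∧ σ u ≠ σ v ∧
    ∀ x ∈ p.support, x ∈ T → x = u ∨ x = v

/-- `S` is Mader matchable in `(G, 𝒯)`: there is a collection of pairwise
vertex-disjoint Mader paths whose set of endpoints is exactly `S`. -/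
def MaderMatchable {V : Type*} (G : SimpleGraph V) (T : Finset V) (σ : V → ℕ)
    (S : Finset V) : Prop :=
  ∃ (n : ℕ) (a b : Fin n → V) (p : ∀ i, G.Walk (a i) (b i)),
    (∀ i, IsMaderPath G T σ (p i)) ∧
    (∀ i j, i ≠ j → ∀ x, x ∈ (p i).support → x ∉ (p j).support) ∧
    (∀ x, x ∈ S ↔ ∃ i, x = a i ∨ x = b i)

open scoped symmDiff

namespace Mader
set_option linter.unusedSectionVars false
open Matrix

variable {V : Type*} [Fintype V] [DecidableEq V]

/-- The linear system attached to `(m, T, S, σ)`. -/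
def Phi (m : Matrix V V ℚ) (T S : Finset V) (σ : V → ℚ) :
    ((V → ℚ) × (V → ℚ)) →ₗ[ℚ] ((V → ℚ) × (V → ℚ)) where
  toFun u :=
    (fun x => if x ∈ T then u.2 x - σ x * u.1 x else (m *ᵥ u.1) x,
     fun x => if x ∈ T then (if x ∈ S then (m *ᵥ u.2) x - σ x * (m *ᵥ u.1) x else u.1 x)
      else (m *ᵥ u.2) x)
  map_add' u w := by
    ext x <;> simp only [Prod.fst_add, Prod.snd_add, Matrix.mulVec_add, Pi.add_apply] <;>
      split_ifs <;> ring
  map_smul' c u := by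
    ext x <;> simp only [Prod.smul_fst, Prod.smul_snd, Matrix.mulVec_smul, Pi.smul_apply,
      smul_eq_mul, RingHom.id_apply] <;>
      split_ifs <;> ring

/-- Nondegeneracy of the system. -/
def Nondeg (m : Matrix V V ℚ) (T S : Finset V) (σ : V → ℚ) : Prop :=
  ∀ f g : V → ℚ, (∀ x ∈ T, g x = σ x * f x) → (∀ x, x ∉ T → (m *ᵥ f) x = 0) →
    (∀ x, x ∉ T → (m *ᵥ g) x = 0) → (∀ x ∈ T, x ∉ S → f x = 0) →
    (∀ x ∈ T, x ∈ S → (m *ᵥ g) x = σ x * (m *ᵥ f) x) → f = 0 ∧ g = 0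

lemma nondeg_iff (m : Matrix V V ℚ) (T S : Finset V) (σ : V → ℚ) :
    Nondeg m T S σ ↔ Function.Injective (Phi m T S σ) := by
  rw [injective_iff_map_eq_zero]
  constructor
  · rintro h ⟨f, g⟩ hu
    rw [Prod.ext_iff] at hu
    obtain ⟨h1, h2⟩ := hu
    have e1 := fun x => congrFun h1 x
    have e2 := fun x => congrFun h2 x
    simp only [Phi, LinearMap.coe_mk, AddHom.coe_mk, Prod.fst_zero, Prod.snd_zero,
      Pi.zero_apply] at e1 e2
    have := h f g ?_ ?_ ?_ ?_ ?_
    · exact Prod.ext this.1 this.2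
    · intro x hx; have := e1 x; simp only [hx, if_true] at this; linarith
    · intro x hx; have := e1 x; simpa only [hx, if_false] using this
    · intro x hx; have := e2 x; simpa only [hx, if_false] using this
    · intro x hx hs; have := e2 x; simpa only [hx, hs, if_true, if_false] using this
    · intro x hx hs; have := e2 x; simp only [hx, hs, if_true] at this; linarith
  · intro h f g h1 h2 h3 h4 h5
    have := h (f, g) ?_
    · exact ⟨congrArg Prod.fst this, congrArg Prod.snd this⟩
    · ext x
      · simp only [Phi, LinearMap.coe_mk, AddHom.coe_mk, Prod.fst_zero, Pi.zero_apply]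
        split_ifs with hx
        · rw [h1 x hx]; ring
        · exact h2 x hx
      · simp only [Phi, LinearMap.coe_mk, AddHom.coe_mk, Prod.snd_zero, Pi.zero_apply]
        split_ifs with hx hs
        · rw [h5 x hx hs]; ring
        · exact h4 x hx hs
        · exact h3 x hx

/-- Solution of the system with right-hand side the unit vector at `s`. -/
lemma Nondeg.exists_sol {m : Matrix V V ℚ} {T S : Finset V} {σ : V → ℚ}
    (h : Nondeg m T S σ) (s : V) (hs : s ∈ T) :
    ∃ f g : V → ℚ, (∀ x ∈ T, g x = σ x * f x) ∧ (∀ x, x ∉ T → (m *ᵥ f) x = 0) ∧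
    (∀ x, x ∉ T → (m *ᵥ g) x = 0) ∧ (∀ x ∈ T, x ∉ S → f x = if x = s then 1 else 0) ∧
    (∀ x ∈ T, x ∈ S → (m *ᵥ g) x = σ x * (m *ᵥ f) x + if x = s then 1 else 0) := by
  rw [nondeg_iff] at h
  obtain ⟨⟨f, g⟩, hu⟩ := (LinearMap.injective_iff_surjective.1 h)
    (0, fun x => if x = s then 1 else 0)
  rw [Prod.ext_iff] at hu
  obtain ⟨h1, h2⟩ := hu
  have e1 := fun x => congrFun h1 x
  have e2 := fun x => congrFun h2 x
  simp only [Phi, LinearMap.coe_mk, AddHom.coe_mk, Pi.zero_apply] at e1 e2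
  refine ⟨f, g, ?_, ?_, ?_, ?_, ?_⟩
  · intro x hx; have := e1 x; simp only [hx, if_true] at this; linarith
  · intro x hx; have := e1 x; simpa only [hx, if_false] using this
  · intro x hx
    have hxs : x ≠ s := by rintro rfl; exact hx hs
    have := e2 x; simpa only [hx, hxs, if_false] using this
  · intro x hx hs; have := e2 x; simpa only [hx, hs, if_true, if_false] using this
  · intro x hx hs; have := e2 x; simp only [hx, hs, if_true] at this; linarith

/-- Skew-symmetry of the form. -/
lemma skew {m : Matrix V V ℚ} (hm : m.IsSymm) (f g f' g' : V → ℚ) :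
    ∑ x, ((f' x * (m *ᵥ g) x - g' x * (m *ᵥ f) x) +
      (f x * (m *ᵥ g') x - g x * (m *ᵥ f') x)) = 0 := by
  have key : ∀ a b : V → ℚ, ∑ x, a x * (m *ᵥ b) x = ∑ x, b x * (m *ᵥ a) x := by
    intro a b
    have := Matrix.dotProduct_mulVec a m b
    rw [← Matrix.mulVec_transpose, hm.eq, dotProduct_comm (m *ᵥ a)] at this
    exact this
  simp only [Finset.sum_add_distrib, Finset.sum_sub_distrib]
  rw [key f' g, key g' f]; ring

/-- Finding a common nondegenerate matrix. -/
lemma exists_common {E : Type*} [AddCommGroup E] [Module ℚ E] [FiniteDimensional ℚ E]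
    (P Q : E →ₗ[ℚ] E) (P' Q' : E →ₗ[ℚ] E) (hP : Function.Injective P)
    (hQ : Function.Injective Q') :
    ∃ t : ℚ, Function.Injective (P + t • (Q - P)) ∧ Function.Injective (P' + t • (Q' - P')) := by
  have poly : ∀ A B : E →ₗ[ℚ] E, ∃ p : Polynomial ℚ, ∀ t, p.eval t = LinearMap.det (A + t • B) := by
    intro A B
    let b := Module.finBasis ℚ E
    refine ⟨((LinearMap.toMatrix b b A).map Polynomial.C +
      (Polynomial.X : Polynomial ℚ) • (LinearMap.toMatrix b b B).map Polynomial.C).det, ?_⟩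
    intro t
    rw [← LinearMap.det_toMatrix b, ← Polynomial.coe_evalRingHom, RingHom.map_det]
    congr 1
    ext i j
    simp
    exact mul_comm _ _
  have inj : ∀ A : E →ₗ[ℚ] E, Function.Injective A ↔ LinearMap.det A ≠ 0 := by
    intro A
    rw [← LinearMap.ker_eq_bot, ← LinearMap.isUnit_iff_ker_eq_bot,
      LinearMap.isUnit_iff_isUnit_det, isUnit_iff_ne_zero]
  obtain ⟨p, hp⟩ := poly P (Q - P)
  obtain ⟨q, hq⟩ := poly P' (Q' - P')
  have hp0 : p ≠ 0 := by
    rintro rfl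
    have := hp 0
    rw [zero_smul, add_zero] at this
    exact (inj P).1 hP (by rw [← this]; simp)
  have hq0 : q ≠ 0 := by
    rintro rfl
    have := hq 1
    rw [one_smul, add_sub_cancel] at this
    exact (inj Q').1 hQ (by rw [← this]; simp)
  obtain ⟨t, ht⟩ := Polynomial.exists_eval_ne_zero_of_natDegree_lt_card (p * q) (mul_ne_zero hp0 hq0)
    (by rw [Cardinal.mk_eq_aleph0]; exact Cardinal.natCast_lt_aleph0)
  rw [Polynomial.eval_mul, hp, hq] at ht
  exact ⟨t, (inj _).2 (left_ne_zero_of_mul ht), (inj _).2 (right_ne_zero_of_mul ht)⟩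

lemma common {m m' : Matrix V V ℚ} {T A B : Finset V} {σ : V → ℚ}
    (hA : Nondeg m T A σ) (hB : Nondeg m' T B σ) :
    ∃ t : ℚ, Nondeg (m + t • (m' - m)) T A σ ∧ Nondeg (m + t • (m' - m)) T B σ := by
  rw [nondeg_iff] at hA hB
  obtain ⟨t, h1, h2⟩ := exists_common _ (Phi m' T A σ) (Phi m T B σ) _ hA hB
  have key : ∀ S, Phi (m + t • (m' - m)) T S σ =
      Phi m T S σ + t • (Phi m' T S σ - Phi m T S σ) := by
    intro S
    refine LinearMap.ext fun u => ?_
    ext x <;> simp [Phi, Matrix.add_mulVec, Matrix.smul_mulVec, Matrix.sub_mulVec] <;>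
      split_ifs <;> ring
  refine ⟨t, ?_, ?_⟩
  · rw [nondeg_iff, key]; exact h1
  · rw [nondeg_iff, key]; exact h2

/-- The diagonal vanishes. -/
lemma sol_self {m : Matrix V V ℚ} (hm : m.IsSymm) {T S : Finset V} {σ : V → ℚ} {s : V}
    (hs : s ∈ T) {f g : V → ℚ} (h1 : ∀ x ∈ T, g x = σ x * f x)
    (h2 : ∀ x, x ∉ T → (m *ᵥ f) x = 0) (h3 : ∀ x, x ∉ T → (m *ᵥ g) x = 0)
    (h4 : ∀ x ∈ T, x ∉ S → f x = if x = s then 1 else 0)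
    (h5 : ∀ x ∈ T, x ∈ S → (m *ᵥ g) x = σ x * (m *ᵥ f) x + if x = s then 1 else 0) :
    (s ∈ S → f s = 0) ∧ (s ∉ S → (m *ᵥ g) s = σ s * (m *ᵥ f) s) := by
  have h := skew hm f g f g
  rw [Finset.sum_eq_single s] at h
  · rw [h1 s hs] at h
    constructor
    · intro hS
      have := h5 s hs hS
      simp only [if_true] at this
      rw [this] at h
      linarith
    · intro hS
      have := h4 s hs hS
      simp only [if_true] at this
      rw [this] at h
      linarith
  · intro z _ hz
    by_cases hT : z ∈ T
    · rw [h1 z hT]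
      by_cases hS : z ∈ S
      · have := h5 z hT hS
        simp only [hz, if_false] at this
        rw [this]; ring
      · have := h4 z hT hS
        simp only [hz, if_false] at this
        rw [this]; ring
    · rw [h2 z hT, h3 z hT]; ring
  · simp

/-- A `2 × 2` principal pivot preserves nondegeneracy. -/
lemma pivot {m : Matrix V V ℚ} (hm : m.IsSymm) {T S : Finset V} {σ : V → ℚ}
    (hN : Nondeg m T S σ) {s y : V}
    (hs : s ∈ T) (hy : y ∈ T) (hsy : y ≠ s) {f g : V → ℚ} (h1 : ∀ x ∈ T, g x = σ x * f x)
    (h2 : ∀ x, x ∉ T → (m *ᵥ f) x = 0) (h3 : ∀ x, x ∉ T → (m *ᵥ g) x = 0)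
    (h4 : ∀ x ∈ T, x ∉ S → f x = if x = s then 1 else 0)
    (h5 : ∀ x ∈ T, x ∈ S → (m *ᵥ g) x = σ x * (m *ᵥ f) x + if x = s then 1 else 0)
    (hy1 : y ∈ S → f y ≠ 0) (hy2 : y ∉ S → (m *ᵥ g) y ≠ σ y * (m *ᵥ f) y) :
    Nondeg m T (S ∆ {s, y}) σ := by
  intro a b k1 k2 k3 k4 k5
  obtain ⟨d1, d2⟩ := sol_self hm hs h1 h2 h3 h4 h5
  have memS : ∀ z, z ≠ s → z ≠ y → (z ∈ S ∆ {s, y} ↔ z ∈ S) := by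
    intro z hz hz'
    simp [Finset.mem_symmDiff, hz, hz']
  have memx : s ∈ S ∆ {s, y} ↔ s ∉ S := by simp [Finset.mem_symmDiff]
  have memy : y ∈ S ∆ {s, y} ↔ y ∉ S := by simp [Finset.mem_symmDiff]
  have h := skew hm a b f g
  rw [Finset.sum_eq_add s y hsy.symm] at h
  rotate_left
  · rintro z _ ⟨hz, hz'⟩
    by_cases hT : z ∈ T
    · rw [h1 z hT, k1 z hT]
      by_cases hS : z ∈ S
      · have e1 := h5 z hT hS
        have e2 := k5 z hT ((memS z hz hz').2 hS)
        simp only [hz, if_false] at e1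
        rw [e1, e2]; ring
      · have e1 := h4 z hT hS
        have e2 := k4 z hT (fun q => hS ((memS z hz hz').1 q))
        simp only [hz, if_false] at e1
        rw [e1, e2]; ring
    · rw [h2 z hT, h3 z hT, k2 z hT, k3 z hT]; ring
  · simp
  · simp
  have tx : f s * (m *ᵥ b) s - g s * (m *ᵥ a) s + (a s * (m *ᵥ g) s - b s * (m *ᵥ f) s) = 0 := by
    rw [h1 s hs, k1 s hs]
    by_cases hS : s ∈ S
    · rw [d1 hS, k4 s hs (by rw [memx]; simpa using hS)]; ring
    · rw [d2 hS, k5 s hs (by rw [memx]; exact hS)]; ring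
  rw [tx, zero_add, h1 y hy, k1 y hy] at h
  -- the y-coordinates vanish
  have ya : y ∈ S → a y = 0 := fun hS => k4 y hy (by rw [memy]; simpa using hS)
  have yr : y ∉ S → (m *ᵥ b) y = σ y * (m *ᵥ a) y := fun hS => k5 y hy (by rw [memy]; exact hS)
  have yr' : y ∈ S → (m *ᵥ b) y = σ y * (m *ᵥ a) y := by
    intro hS
    have e := h5 y hy hS
    simp only [hsy, if_false] at e
    rw [e, ya hS] at h
    have : f y * ((m *ᵥ b) y - σ y * (m *ᵥ a) y) = 0 := by linarith
    have := (mul_eq_zero.1 this).resolve_left (hy1 hS)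
    linarith
  have ya' : y ∉ S → a y = 0 := by
    intro hS
    have e := h4 y hy hS
    simp only [hsy, if_false] at e
    rw [e, yr hS] at h
    have : a y * ((m *ᵥ g) y - σ y * (m *ᵥ f) y) = 0 := by linarith
    exact (mul_eq_zero.1 this).resolve_right (sub_ne_zero.2 (hy2 hS))
  set c : ℚ := if s ∈ S then (m *ᵥ b) s - σ s * (m *ᵥ a) s else a s with hc
  have hz := hN (a - c • f) (b - c • g) ?_ ?_ ?_ ?_ ?_
  · obtain ⟨za, zb⟩ := hz
    have za : a = c • f := sub_eq_zero.1 za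
    have zb : b = c • g := sub_eq_zero.1 zb
    have c0 : c = 0 := by
      by_cases hS : y ∈ S
      · have := ya hS
        rw [za] at this
        simpa [hy1 hS] using this
      · have := yr hS
        rw [za, zb, Matrix.mulVec_smul, Matrix.mulVec_smul] at this
        simp only [Pi.smul_apply, smul_eq_mul] at this
        have : c * ((m *ᵥ g) y - σ y * (m *ᵥ f) y) = 0 := by linarith
        exact (mul_eq_zero.1 this).resolve_right (sub_ne_zero.2 (hy2 hS))
    rw [za, zb, c0]; simp
  · intro x hx
    simp only [Pi.sub_apply, Pi.smul_apply, smul_eq_mul, h1 x hx, k1 x hx]; ring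
  · intro x hx
    simp [Matrix.mulVec_sub, Matrix.mulVec_smul, h2 x hx, k2 x hx]
  · intro x hx
    simp [Matrix.mulVec_sub, Matrix.mulVec_smul, h3 x hx, k3 x hx]
  · intro x hx hS
    simp only [Pi.sub_apply, Pi.smul_apply, smul_eq_mul, h4 x hx hS]
    by_cases hxs : x = s
    · subst hxs
      simp [hc, hS]
    · by_cases hxy : x = y
      · subst hxy
        simp [hxs, ya' hS]
      · simp [hxs, k4 x hx (fun q => hS ((memS x hxs hxy).1 q))]
  · intro x hx hS
    simp only [Matrix.mulVec_sub, Matrix.mulVec_smul, Pi.sub_apply, Pi.smul_apply, smul_eq_mul,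
      h5 x hx hS]
    by_cases hxs : x = s
    · subst hxs
      simp only [hc, hS, if_true]; ring
    · by_cases hxy : x = y
      · subst hxy
        simp only [hxs, yr' hS, if_false]; ring
      · simp only [hxs, k5 x hx ((memS x hxs hxy).2 hS), if_false]; ring

/-- The exchange axiom for the nondegenerate sets of a fixed matrix. -/
lemma exchange {m : Matrix V V ℚ} (hm : m.IsSymm) {T A B : Finset V} {σ : V → ℚ}
    (hAT : A ⊆ T) (hBT : B ⊆ T)
    (hA : Nondeg m T A σ) (hB : Nondeg m T B σ) {s : V} (hs : s ∈ A ∆ B) :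
    ∃ y ∈ A ∆ B, Nondeg m T (A ∆ {s, y}) σ := by
  have sub : ∀ z ∈ A ∆ B, z ∈ T := by
    intro z hz
    rcases Finset.mem_symmDiff.1 hz with h | h
    · exact hAT h.1
    · exact hBT h.1
  have hsT := sub s hs
  obtain ⟨f, g, h1, h2, h3, h4, h5⟩ := hA.exists_sol s hsT
  obtain ⟨d1, d2⟩ := sol_self hm hsT h1 h2 h3 h4 h5
  by_contra hcon
  push Not at hcon
  have q : ∀ y ∈ A ∆ B, (y ∈ A → f y = 0) ∧ (y ∉ A → (m *ᵥ g) y = σ y * (m *ᵥ f) y) := by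
    intro y hy
    by_cases hys : y = s
    · subst hys; exact ⟨d1, d2⟩
    · by_contra hq
      apply hcon y hy
      refine pivot hm hA hsT (sub y hy) hys h1 h2 h3 h4 h5 ?_ ?_
      · intro h h'
        exact hq ⟨fun _ => h', fun h'' => absurd h h''⟩
      · intro h h'
        exact hq ⟨fun h'' => absurd h'' h, fun _ => h'⟩
  have ne : ∀ x, x ∉ A ∆ B → x ≠ s := by rintro x hx rfl; exact hx hs
  have hz := hB f g h1 h2 h3 ?_ ?_
  · obtain ⟨zf, zg⟩ := hz
    by_cases hS : s ∈ A
    · have := h5 s hsT hS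
      simp [zf, zg] at this
    · have := h4 s hsT hS
      simp [zf] at this
  · intro x hx hxB
    by_cases hxA : x ∈ A
    · exact (q x (Finset.mem_symmDiff.2 (Or.inl ⟨hxA, hxB⟩))).1 hxA
    · rw [h4 x hx hxA, if_neg (ne x (by simp [Finset.mem_symmDiff, hxA, hxB]))]
  · intro x hx hxB
    by_cases hxA : x ∈ A
    · rw [h5 x hx hxA, if_neg (ne x (by simp [Finset.mem_symmDiff, hxA, hxB])), add_zero]
    · exact (q x (Finset.mem_symmDiff.2 (Or.inr ⟨hxB, hxA⟩))).2 hxA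

/-- Recursive description of path packings: internal vertices avoid `T`, the set of ends is `S`. -/
inductive Pk (G : SimpleGraph V) : Finset V → Finset V → (V → ℚ) → Prop
  | nil (T : Finset V) (σ : V → ℚ) : Pk G ∅ T σ
  | edge (S T : Finset V) (σ : V → ℚ) (s t : V) (hs : s ∈ S) (ht : t ∈ S) (h : G.Adj s t)
      (hσ : σ s ≠ σ t) (hp : Pk G ((S.erase s).erase t) T σ) : Pk G S T σ
  | ext (S T : Finset V) (σ : V → ℚ) (s v : V) (hs : s ∈ S) (hv : v ∉ T) (h : G.Adj s v)
      (hp : Pk G (insert v (S.erase s)) (insert v T) (Function.update σ v (σ s))) : Pk G S T σ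

lemma pk_of_nondeg (G : SimpleGraph V) {m : Matrix V V ℚ} (hm : m.IsSymm)
    (hG : ∀ x y, x ≠ y → m x y ≠ 0 → G.Adj x y) (n : ℕ) :
    ∀ (S T : Finset V) (σ : V → ℚ), S.card + Tᶜ.card ≤ n → S ⊆ T → Nondeg m T S σ →
      Pk G S T σ := by
  induction n with
  | zero =>
    intro S T σ hn _ _
    have : S = ∅ := Finset.card_eq_zero.1 (by omega)
    subst this
    exact Pk.nil _ _
  | succ n ih =>
    intro S T σ hn hST hN
    rcases S.eq_empty_or_nonempty with rfl | ⟨s, hs⟩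
    · exact Pk.nil _ _
    have hsT := hST hs
    have cS := Finset.card_erase_add_one hs
    obtain ⟨f, g, h1, h2, h3, h4, h5⟩ := hN.exists_sol s hsT
    obtain ⟨d1, -⟩ := sol_self hm hsT h1 h2 h3 h4 h5
    have fs := d1 hs
    have gs : g s = 0 := by rw [h1 s hsT, fs, mul_zero]
    obtain ⟨v, hv⟩ : ∃ v, m s v * (g v - σ s * f v) ≠ 0 := by
      by_contra hcon
      push Not at hcon
      have e := h5 s hsT hs
      have : (m *ᵥ g) s - σ s * (m *ᵥ f) s = 0 := by
        simp only [Matrix.mulVec, dotProduct]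
        rw [Finset.mul_sum, ← Finset.sum_sub_distrib]
        refine Finset.sum_eq_zero fun v _ => ?_
        rw [← hcon v]; ring
      simp only [if_true] at e
      linarith
    have hmv := left_ne_zero_of_mul hv
    have hgv := right_ne_zero_of_mul hv
    have hvs : v ≠ s := by
      rintro rfl
      rw [fs, gs] at hgv
      simp at hgv
    have adj := hG s v hvs.symm hmv
    by_cases hvT : v ∈ T
    · have hvS : v ∈ S := by
        by_contra hvS
        have := h4 v hvT hvS
        rw [h1 v hvT, this, if_neg hvs] at hgv
        simp at hgv
      have hfv : f v ≠ 0 := by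
        intro h0
        rw [h1 v hvT, h0] at hgv
        simp at hgv
      have hσ : σ s ≠ σ v := by
        intro h0
        rw [h1 v hvT, h0] at hgv
        simp at hgv
      refine Pk.edge S T σ s v hs hvS adj hσ (ih _ _ _ ?_ ?_ ?_)
      · have := Finset.card_erase_le (s := S.erase s) (a := v)
        omega
      · exact ((Finset.erase_subset _ _).trans (Finset.erase_subset _ _)).trans hST
      · have := pivot hm hN hsT hvT hvs h1 h2 h3 h4 h5 (fun _ => hfv) (fun h => absurd hvS h)
        convert this using 1
        ext z
        simp only [Finset.mem_erase, Finset.mem_symmDiff, Finset.mem_insert,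
          Finset.mem_singleton]
        grind
    · have hvS : v ∉ S := fun h => hvT (hST h)
      refine Pk.ext S T σ s v hs hvT adj (ih _ _ _ ?_ ?_ ?_)
      · have e1 := Finset.card_insert_le v (S.erase s)
        have e2 : (insert v T)ᶜ.card + 1 = Tᶜ.card := by
          rw [Finset.compl_insert]
          exact Finset.card_erase_add_one (by simpa using hvT)
        omega
      · exact Finset.insert_subset_insert _ ((Finset.erase_subset _ _).trans hST)
      · intro a b k1 k2 k3 k4 k5
        have k1v := k1 v (Finset.mem_insert_self _ _)
        have k5v := k5 v (Finset.mem_insert_self _ _) (Finset.mem_insert_self _ _)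
        rw [Function.update_self] at k1v k5v
        have neT : ∀ z ∈ T, z ≠ v := by rintro z hz rfl; exact hvT hz
        have k1T : ∀ z ∈ T, b z = σ z * a z := by
          intro z hz
          have := k1 z (Finset.mem_insert_of_mem hz)
          rwa [Function.update_of_ne (neT z hz)] at this
        have as : a s = 0 := k4 s (Finset.mem_insert_of_mem hsT) (by simp [hvs.symm])
        have aT : ∀ z ∈ T, z ∉ S → a z = 0 := by
          intro z hz hzS
          exact k4 z (Finset.mem_insert_of_mem hz) (by simp [neT z hz, hzS])
        have rS : ∀ z ∈ T, z ∈ S → z ≠ s → (m *ᵥ b) z = σ z * (m *ᵥ a) z := by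
          intro z hz hzS hzs
          have := k5 z (Finset.mem_insert_of_mem hz) (by simp [hzs, hzS])
          rwa [Function.update_of_ne (neT z hz)] at this
        have h := skew hm a b f g
        rw [Finset.sum_eq_single v] at h
        rotate_left
        · intro z _ hz
          by_cases hT : z ∈ T
          · rw [h1 z hT, k1T z hT]
            by_cases hzs : z = s
            · subst hzs
              rw [fs, as]; ring
            by_cases hS : z ∈ S
            · have e1 := h5 z hT hS
              simp only [hzs, if_false] at e1
              rw [e1, rS z hT hS hzs]; ring
            · have e1 := h4 z hT hS
              simp only [hzs, if_false] at e1
              rw [e1, aT z hT hS]; ring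
          · have hT' : z ∉ insert v T := by simp [hz, hT]
            rw [h2 z hT, h3 z hT, k2 z hT', k3 z hT']; ring
        · simp
        rw [h2 v hvT, h3 v hvT, k5v] at h
        have Fv : (m *ᵥ a) v = 0 := by
          have : (g v - σ s * f v) * (m *ᵥ a) v = 0 := by linarith
          exact (mul_eq_zero.1 this).resolve_left hgv
        have Hv : (m *ᵥ b) v = 0 := by rw [k5v, Fv, mul_zero]
        set c : ℚ := (m *ᵥ b) s - σ s * (m *ᵥ a) s with hc
        have hz := hN (a - c • f) (b - c • g) ?_ ?_ ?_ ?_ ?_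
        · obtain ⟨za, zb⟩ := hz
          have za : a = c • f := sub_eq_zero.1 za
          have zb : b = c • g := sub_eq_zero.1 zb
          have c0 : c = 0 := by
            rw [za, zb] at k1v
            simp only [Pi.smul_apply, smul_eq_mul] at k1v
            have : c * (g v - σ s * f v) = 0 := by linarith
            exact (mul_eq_zero.1 this).resolve_right hgv
          rw [za, zb, c0]; simp
        · intro x hx
          simp only [Pi.sub_apply, Pi.smul_apply, smul_eq_mul, h1 x hx, k1T x hx]; ring
        · intro x hx
          have : (m *ᵥ a) x = 0 := by
            by_cases hxv : x = v
            · rw [hxv, Fv]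
            · exact k2 x (by simp [hxv, hx])
          simp [Matrix.mulVec_sub, Matrix.mulVec_smul, h2 x hx, this]
        · intro x hx
          have : (m *ᵥ b) x = 0 := by
            by_cases hxv : x = v
            · rw [hxv, Hv]
            · exact k3 x (by simp [hxv, hx])
          simp [Matrix.mulVec_sub, Matrix.mulVec_smul, h3 x hx, this]
        · intro x hx hS
          have hxs : x ≠ s := by rintro rfl; exact hS hs
          simp [h4 x hx hS, hxs, aT x hx hS]
        · intro x hx hS
          simp only [Matrix.mulVec_sub, Matrix.mulVec_smul, Pi.sub_apply, Pi.smul_apply,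
            smul_eq_mul, h5 x hx hS]
          by_cases hxs : x = s
          · subst hxs
            simp only [hc, if_true]; ring
          · simp only [hxs, rS x hx hS hxs, if_false]; ring

/-- Replace the row and column of `s` by the single edge `s v`. -/
def addEdge (m : Matrix V V ℚ) (s v : V) : Matrix V V ℚ := fun x y =>
  if x = s then (if y = v then 1 else 0) else if y = s then (if x = v then 1 else 0) else m x y

lemma addEdge_symm {m : Matrix V V ℚ} (hm : m.IsSymm) {s v : V} (h : s ≠ v) :
    (addEdge m s v).IsSymm := by
  ext x y
  have := hm.apply x y
  simp only [Matrix.transpose_apply, addEdge]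
  grind

lemma addEdge_adj (G : SimpleGraph V) {m : Matrix V V ℚ} {s v : V} (h : G.Adj s v)
    (hG : ∀ x y, x ≠ y → m x y ≠ 0 → G.Adj x y) :
    ∀ x y, x ≠ y → addEdge m s v x y ≠ 0 → G.Adj x y := by
  intro x y hxy
  simp only [addEdge]
  have := h.symm
  have := hG x y hxy
  split_ifs <;> simp_all

lemma addEdge_self (m : Matrix V V ℚ) (s v : V) (f : V → ℚ) :
    (addEdge m s v *ᵥ f) s = f v := by
  simp [Matrix.mulVec, dotProduct, addEdge]

lemma addEdge_other (m : Matrix V V ℚ) (s v : V) (f : V → ℚ) (x : V) (hx : x ≠ s) :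
    (addEdge m s v *ᵥ f) x = (m *ᵥ Function.update f s 0) x + if x = v then f s else 0 := by
  simp only [Matrix.mulVec, dotProduct, addEdge, if_neg hx]
  rw [← Finset.add_sum_erase _ _ (Finset.mem_univ s),
    ← Finset.add_sum_erase _ (fun y => m x y * Function.update f s 0 y) (Finset.mem_univ s)]
  simp only [if_true, Function.update_self]
  rw [Finset.sum_congr rfl (g := fun y => m x y * Function.update f s 0 y)]
  · split_ifs <;> ring
  · intro y hy
    have := Finset.ne_of_mem_erase hy
    rw [if_neg this, Function.update_of_ne this]

lemma eq_zero_of_update {f : V → ℚ} {s : V} (h : Function.update f s 0 = 0) (hs : f s = 0) :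
    f = 0 := by
  rw [← h, ← hs, Function.update_eq_self]

lemma nondeg_of_pk (G : SimpleGraph V) {S T : Finset V} {σ : V → ℚ} (h : Pk G S T σ) :
    S ⊆ T → ∃ m : Matrix V V ℚ, m.IsSymm ∧ (∀ x y, x ≠ y → m x y ≠ 0 → G.Adj x y) ∧
      Nondeg m T S σ := by
  induction h with
  | nil T σ =>
    intro _
    refine ⟨1, Matrix.isSymm_one, fun x y hxy h => absurd (Matrix.one_apply_ne hxy) h, ?_⟩
    intro f g h1 h2 h3 h4 h5
    simp only [Matrix.one_mulVec] at h2 h3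
    have hf : ∀ x, f x = 0 := by
      intro x
      by_cases hx : x ∈ T
      · exact h4 x hx (by simp)
      · exact h2 x hx
    refine ⟨funext hf, funext fun x => ?_⟩
    by_cases hx : x ∈ T
    · rw [h1 x hx, hf, mul_zero]; rfl
    · exact h3 x hx
  | edge S T σ s t hs ht adj hσ hp ih =>
    intro hST
    obtain ⟨m, hm, hG, hN⟩ := ih
      (((Finset.erase_subset _ _).trans (Finset.erase_subset _ _)).trans hST)
    have hne := adj.ne
    refine ⟨addEdge m s t, addEdge_symm hm hne, addEdge_adj G adj hG, ?_⟩
    intro f g h1 h2 h3 h4 h5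
    have hsT := hST hs
    have htT := hST ht
    have es := h5 s hsT hs
    rw [addEdge_self, addEdge_self, h1 t htT] at es
    have ft : f t = 0 := by
      have : (σ t - σ s) * f t = 0 := by linarith
      exact (mul_eq_zero.1 this).resolve_left (sub_ne_zero.2 hσ.symm)
    have et := h5 t htT ht
    rw [addEdge_other _ _ _ _ _ hne.symm, addEdge_other _ _ _ _ _ hne.symm, if_pos rfl,
      if_pos rfl, h1 s hsT] at et
    have hz := hN (Function.update f s 0) (Function.update g s 0) ?_ ?_ ?_ ?_ ?_
    · obtain ⟨zf, zg⟩ := hz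
      rw [zf, zg] at et
      simp only [Matrix.mulVec_zero, Pi.zero_apply] at et
      have fs : f s = 0 := by
        have : (σ t - σ s) * f s = 0 := by linarith
        exact (mul_eq_zero.1 this).resolve_left (sub_ne_zero.2 hσ.symm)
      exact ⟨eq_zero_of_update zf fs, eq_zero_of_update zg (by rw [h1 s hsT, fs, mul_zero])⟩
    · intro x hx
      by_cases hxs : x = s
      · subst hxs; simp
      · simp [hxs, h1 x hx]
    · intro x hx
      have hxs : x ≠ s := by rintro rfl; exact hx hsT
      have hxt : x ≠ t := by rintro rfl; exact hx htT
      have := h2 x hx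
      rwa [addEdge_other _ _ _ _ _ hxs, if_neg hxt, add_zero] at this
    · intro x hx
      have hxs : x ≠ s := by rintro rfl; exact hx hsT
      have hxt : x ≠ t := by rintro rfl; exact hx htT
      have := h3 x hx
      rwa [addEdge_other _ _ _ _ _ hxs, if_neg hxt, add_zero] at this
    · intro x hx hxS
      by_cases hxs : x = s
      · subst hxs; simp
      · rw [Function.update_of_ne hxs]
        by_cases hxt : x = t
        · rw [hxt, ft]
        · exact h4 x hx (by simpa [hxs, hxt] using hxS)
    · intro x hx hxS
      simp only [Finset.mem_erase] at hxS
      obtain ⟨hxt, hxs, hxS⟩ := hxS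
      have := h5 x hx hxS
      rwa [addEdge_other _ _ _ _ _ hxs, addEdge_other _ _ _ _ _ hxs, if_neg hxt, if_neg hxt,
        add_zero, add_zero] at this
  | ext S T σ s v hs hv adj hp ih =>
    intro hST
    obtain ⟨m, hm, hG, hN⟩ := ih
      (Finset.insert_subset_insert _ ((Finset.erase_subset _ _).trans hST))
    have hne := adj.ne
    refine ⟨addEdge m s v, addEdge_symm hm hne, addEdge_adj G adj hG, ?_⟩
    intro f g h1 h2 h3 h4 h5
    have hsT := hST hs
    have es := h5 s hsT hs
    rw [addEdge_self, addEdge_self] at es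
    have e2 := h2 v hv
    have e3 := h3 v hv
    rw [addEdge_other _ _ _ _ _ hne.symm, if_pos rfl] at e2 e3
    rw [h1 s hsT] at e3
    have hz := hN (Function.update f s 0) (Function.update g s 0) ?_ ?_ ?_ ?_ ?_
    · obtain ⟨zf, zg⟩ := hz
      rw [zf] at e2
      simp only [Matrix.mulVec_zero, Pi.zero_apply, zero_add] at e2
      exact ⟨eq_zero_of_update zf e2, eq_zero_of_update zg (by rw [h1 s hsT, e2, mul_zero])⟩
    · intro x hx
      by_cases hxv : x = v
      · subst hxv
        simp [hne.symm, es]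
      have hx := (Finset.mem_insert.1 hx).resolve_left hxv
      by_cases hxs : x = s
      · subst hxs; simp
      · simp [hxs, hxv, h1 x hx]
    · intro x hx
      simp only [Finset.mem_insert, not_or] at hx
      have hxs : x ≠ s := by rintro rfl; exact hx.2 hsT
      have := h2 x hx.2
      rwa [addEdge_other _ _ _ _ _ hxs, if_neg hx.1, add_zero] at this
    · intro x hx
      simp only [Finset.mem_insert, not_or] at hx
      have hxs : x ≠ s := by rintro rfl; exact hx.2 hsT
      have := h3 x hx.2
      rwa [addEdge_other _ _ _ _ _ hxs, if_neg hx.1, add_zero] at this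
    · intro x hx hxS
      simp only [Finset.mem_insert, not_or, Finset.mem_erase, not_and] at hx hxS
      have hx := hx.resolve_left hxS.1
      by_cases hxs : x = s
      · subst hxs; simp
      · rw [Function.update_of_ne hxs]
        exact h4 x hx (hxS.2 hxs)
    · intro x hx hxS
      by_cases hxv : x = v
      · subst hxv
        rw [Function.update_self]
        have : (m *ᵥ Function.update f s 0) x = - f s := by linarith
        rw [this]
        linarith
      simp only [Finset.mem_insert, hxv, false_or, Finset.mem_erase] at hx hxS
      have := h5 x hx hxS.2
      rw [Function.update_of_ne hxv]
      rwa [addEdge_other _ _ _ _ _ hxS.1, addEdge_other _ _ _ _ _ hxS.1, if_neg hxv, if_neg hxv,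
        add_zero, add_zero] at this

/-- A list of pairwise disjoint paths with ends `S`, distinct labels, and interior off `T`. -/
def PackL (G : SimpleGraph V) (S T : Finset V) (σ : V → ℚ)
    (L : List (Σ a b : V, G.Walk a b)) : Prop :=
  (∀ p ∈ L, p.2.2.IsPath ∧ p.1 ∈ S ∧ p.2.1 ∈ S ∧ σ p.1 ≠ σ p.2.1 ∧
    ∀ x ∈ p.2.2.support, x ∈ T → x = p.1 ∨ x = p.2.1) ∧
  L.Pairwise (fun p q => ∀ x, x ∈ p.2.2.support → x ∉ q.2.2.support) ∧
  ∀ x, x ∈ S → ∃ p ∈ L, x = p.1 ∨ x = p.2.1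

lemma PackL.perm {G : SimpleGraph V} {S T : Finset V} {σ : V → ℚ}
    {L L' : List (Σ a b : V, G.Walk a b)} (h : PackL G S T σ L) (hL : L.Perm L') :
    PackL G S T σ L' := by
  obtain ⟨h1, h2, h3⟩ := h
  refine ⟨fun p hp => h1 p (hL.mem_iff.2 hp), ?_, fun x hx => ?_⟩
  · refine (hL.pairwise_iff ?_).1 h2
    intro p q hpq x hx hx'
    exact hpq x hx' hx
  · obtain ⟨p, hp, hp'⟩ := h3 x hx
    exact ⟨p, hL.mem_iff.1 hp, hp'⟩

lemma PackL.reverse {G : SimpleGraph V} {S T : Finset V} {σ : V → ℚ} {a b : V} {p : G.Walk a b}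
    {L : List (Σ a b : V, G.Walk a b)} (h : PackL G S T σ (⟨a, b, p⟩ :: L)) :
    PackL G S T σ (⟨b, a, p.reverse⟩ :: L) := by
  obtain ⟨h1, h2, h3⟩ := h
  rw [List.pairwise_cons] at h2
  refine ⟨?_, ?_, ?_⟩
  · intro q hq
    rcases List.mem_cons.1 hq with rfl | hq
    · obtain ⟨k1, k2, k3, k4, k5⟩ := h1 _ List.mem_cons_self
      refine ⟨k1.reverse, k3, k2, k4.symm, fun x hx hT => ?_⟩
      exact (k5 x (by simpa using hx) hT).symm
    · exact h1 q (List.mem_cons_of_mem _ hq)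
  · rw [List.pairwise_cons]
    refine ⟨fun q hq x hx => h2.1 q hq x (by simpa using hx), h2.2⟩
  · intro x hx
    obtain ⟨q, hq, hq'⟩ := h3 x hx
    rcases List.mem_cons.1 hq with rfl | hq
    · exact ⟨_, List.mem_cons_self, hq'.symm⟩
    · exact ⟨q, List.mem_cons_of_mem _ hq, hq'⟩

lemma packL_of_pk (G : SimpleGraph V) {S T : Finset V} {σ : V → ℚ} (h : Pk G S T σ) :
    S ⊆ T → ∃ L, PackL G S T σ L := by
  induction h with
  | nil T σ =>
    intro _
    exact ⟨[], by simp [PackL]⟩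
  | edge S T σ s t hs ht adj hσ hp ih =>
    intro hST
    obtain ⟨L, h1, h2, h3⟩ := ih
      (((Finset.erase_subset _ _).trans (Finset.erase_subset _ _)).trans hST)
    have avoid : ∀ x ∈ T, x ∉ (S.erase s).erase t → ∀ q ∈ L, x ∉ q.2.2.support := by
      intro x hxT hx q hq hxq
      obtain ⟨_, k2, k3, _, k5⟩ := h1 q hq
      rcases k5 x hxq hxT with rfl | rfl
      · exact hx k2
      · exact hx k3
    refine ⟨⟨s, t, adj.toWalk⟩ :: L, ?_, ?_, ?_⟩
    · intro q hq
      rcases List.mem_cons.1 hq with rfl | hq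
      · refine ⟨?_, hs, ht, hσ, ?_⟩
        · simp [adj.ne]
        · intro x hx _
          simpa using hx
      · obtain ⟨k1, k2, k3, k4, k5⟩ := h1 q hq
        exact ⟨k1, Finset.mem_of_mem_erase (Finset.mem_of_mem_erase k2),
          Finset.mem_of_mem_erase (Finset.mem_of_mem_erase k3), k4, k5⟩
    · rw [List.pairwise_cons]
      refine ⟨fun q hq x hx => ?_, h2⟩
      have hx : x = s ∨ x = t := by simpa using hx
      rcases hx with rfl | rfl
      · exact avoid _ (hST hs) (by simp) q hq
      · exact avoid _ (hST ht) (by simp) q hq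
    · intro x hx
      by_cases hxs : x = s
      · exact ⟨_, List.mem_cons_self, Or.inl hxs⟩
      by_cases hxt : x = t
      · exact ⟨_, List.mem_cons_self, Or.inr hxt⟩
      obtain ⟨q, hq, hq'⟩ := h3 x (by simp [hxs, hxt, hx])
      exact ⟨q, List.mem_cons_of_mem _ hq, hq'⟩
  | ext S T σ s v hs hv adj hp ih =>
    intro hST
    obtain ⟨L, hL⟩ := ih
      (Finset.insert_subset_insert _ ((Finset.erase_subset _ _).trans hST))
    -- normalise: the first path starts at `v`
    obtain ⟨b, p, L', hL'⟩ : ∃ (b : V) (p : G.Walk v b) (L' : List (Σ a b : V, G.Walk a b)),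
        PackL G (insert v (S.erase s)) (insert v T) (Function.update σ v (σ s))
          (⟨v, b, p⟩ :: L') := by
      obtain ⟨⟨a, b, p⟩, hq, hq'⟩ := hL.2.2 v (Finset.mem_insert_self _ _)
      obtain ⟨L1, L2, rfl⟩ := List.append_of_mem hq
      have hperm := hL.perm List.perm_middle
      rcases hq' with rfl | rfl
      · exact ⟨_, _, _, hperm⟩
      · exact ⟨_, _, _, hperm.reverse⟩
    have hsT := hST hs
    have hsv := adj.ne
    have neT : ∀ x ∈ T, x ≠ v := by rintro x hx rfl; exact hv hx
    obtain ⟨h1, h2, h3⟩ := hL'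
    have avoid : ∀ q ∈ (⟨v, b, p⟩ :: L' : List (Σ a b : V, G.Walk a b)), s ∉ q.2.2.support := by
      intro q hq hxq
      obtain ⟨_, k2, k3, _, k5⟩ := h1 q hq
      have hnot : s ∉ insert v (S.erase s) := by simp [hsv]
      rcases k5 s hxq (Finset.mem_insert_of_mem hsT) with e | e
      · exact hnot ((congrArg (· ∈ insert v (S.erase s)) e).mpr k2)
      · exact hnot ((congrArg (· ∈ insert v (S.erase s)) e).mpr k3)
    rw [List.pairwise_cons] at h2
    have key : ∀ x, x ≠ v → x ∈ insert v (S.erase s) → x ∈ S := by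
      intro x hx h
      exact Finset.mem_of_mem_erase ((Finset.mem_insert.1 h).resolve_left hx)
    obtain ⟨k1, k2, k3, k4, k5⟩ := h1 _ List.mem_cons_self
    have hbv : b ≠ v := by rintro rfl; exact k4 rfl
    simp only [Function.update_self, Function.update_of_ne hbv] at k4
    refine ⟨⟨s, b, SimpleGraph.Walk.cons adj p⟩ :: L', ?_, ?_, ?_⟩
    · intro q hq
      rcases List.mem_cons.1 hq with rfl | hq
      · refine ⟨?_, hs, key b hbv k3, k4, ?_⟩
        · rw [SimpleGraph.Walk.cons_isPath_iff]
          exact ⟨k1, avoid _ List.mem_cons_self⟩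
        · intro x hx hxT
          simp only [SimpleGraph.Walk.support_cons, List.mem_cons] at hx
          rcases hx with hx | hx
          · exact Or.inl hx
          · exact Or.inr ((k5 x hx (Finset.mem_insert_of_mem hxT)).resolve_left (neT x hxT))
      · have hd := h2.1 q hq v (SimpleGraph.Walk.start_mem_support p)
        obtain ⟨j1, j2, j3, j4, j5⟩ := h1 q (List.mem_cons_of_mem _ hq)
        have n1 : q.1 ≠ v := by
          intro e; apply hd; rw [← e]; exact SimpleGraph.Walk.start_mem_support _
        have n2 : q.2.1 ≠ v := by
          intro e; apply hd; rw [← e]; exact SimpleGraph.Walk.end_mem_support _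
        rw [Function.update_of_ne n1, Function.update_of_ne n2] at j4
        exact ⟨j1, key _ n1 j2, key _ n2 j3, j4,
          fun x hx hxT => j5 x hx (Finset.mem_insert_of_mem hxT)⟩
    · rw [List.pairwise_cons]
      refine ⟨fun q hq x hx => ?_, h2.2⟩
      simp only [SimpleGraph.Walk.support_cons, List.mem_cons] at hx
      rcases hx with rfl | hx
      · exact avoid q (List.mem_cons_of_mem _ hq)
      · exact h2.1 q hq x hx
    · intro x hx
      by_cases hxs : x = s
      · exact ⟨_, List.mem_cons_self, Or.inl hxs⟩
      obtain ⟨q, hq, hq'⟩ := h3 x (by simp [hxs, hx])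
      rcases List.mem_cons.1 hq with rfl | hq
      · exact ⟨_, List.mem_cons_self, Or.inr (hq'.resolve_left (neT x (hST hx)))⟩
      · exact ⟨q, List.mem_cons_of_mem _ hq, hq'⟩

lemma pk_of_packL (G : SimpleGraph V) (n : ℕ) :
    ∀ (S T : Finset V) (σ : V → ℚ) (L : List (Σ a b : V, G.Walk a b)),
      (L.map fun p => p.2.2.length).sum ≤ n → S ⊆ T → PackL G S T σ L → Pk G S T σ := by
  induction n with
  | zero =>
    intro S T σ L hn hST h
    obtain ⟨h1, h2, h3⟩ := h
    match L with
    | [] =>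
      have : S = ∅ := Finset.eq_empty_of_forall_notMem fun x hx => by simpa using h3 x hx
      subst this
      exact Pk.nil _ _
    | ⟨a, _, .nil⟩ :: L =>
      exact absurd rfl (h1 _ List.mem_cons_self).2.2.2.1
    | ⟨a, b, .cons h p⟩ :: L => simp at hn
  | succ n ih =>
    intro S T σ L hn hST h
    obtain ⟨h1, h2, h3⟩ := h
    match L with
    | [] =>
      have : S = ∅ := Finset.eq_empty_of_forall_notMem fun x hx => by simpa using h3 x hx
      subst this
      exact Pk.nil _ _
    | ⟨a, _, .nil⟩ :: L =>
      exact absurd rfl (h1 _ List.mem_cons_self).2.2.2.1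
    | ⟨a, _, .cons (v := b) adj .nil⟩ :: L =>
      obtain ⟨k1, k2, k3, k4, k5⟩ := h1 _ List.mem_cons_self
      rw [List.pairwise_cons] at h2
      simp only at k2 k3 k4
      refine Pk.edge S T σ a b k2 k3 adj k4 (ih _ _ _ L ?_ ?_ ⟨?_, h2.2, ?_⟩)
      · simp at hn; omega
      · exact ((Finset.erase_subset _ _).trans (Finset.erase_subset _ _)).trans hST
      · intro q hq
        obtain ⟨j1, j2, j3, j4, j5⟩ := h1 q (List.mem_cons_of_mem _ hq)
        have da := h2.1 q hq a (by simp)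
        have db := h2.1 q hq b (by simp)
        have e1 := SimpleGraph.Walk.start_mem_support q.2.2
        have e2 := SimpleGraph.Walk.end_mem_support q.2.2
        refine ⟨j1, ?_, ?_, j4, j5⟩
        · simp only [Finset.mem_erase]
          exact ⟨fun e => db (e ▸ e1), fun e => da (e ▸ e1), j2⟩
        · simp only [Finset.mem_erase]
          exact ⟨fun e => db (e ▸ e2), fun e => da (e ▸ e2), j3⟩
      · intro x hx
        simp only [Finset.mem_erase] at hx
        obtain ⟨q, hq, hq'⟩ := h3 x hx.2.2
        rcases List.mem_cons.1 hq with rfl | hq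
        · exact absurd hq' (by simp [hx.1, hx.2.1])
        · exact ⟨q, hq, hq'⟩
    | ⟨a, b, .cons (v := v) adj (.cons (v := w) adj' r)⟩ :: L =>
      obtain ⟨k1, k2, k3, k4, k5⟩ := h1 _ List.mem_cons_self
      rw [List.pairwise_cons] at h2
      simp only at k1 k2 k3 k4 k5
      rw [SimpleGraph.Walk.cons_isPath_iff] at k1
      obtain ⟨p1, p2⟩ := k1
      have hr := (SimpleGraph.Walk.cons_isPath_iff _ _).1 p1
      have hbr : b ∈ r.support := SimpleGraph.Walk.end_mem_support r
      have hvb : v ≠ b := by rintro rfl; exact hr.2 hbr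
      have hab : a ≠ b := by rintro rfl; exact k4 rfl
      have hvT : v ∉ T := by
        intro hv
        rcases k5 v (by simp) hv with e | e
        · exact adj.ne e.symm
        · exact hvb e
      refine Pk.ext S T σ a v k2 hvT adj
        (ih _ _ _ (⟨v, b, .cons adj' r⟩ :: L) ?_ ?_ ⟨?_, ?_, ?_⟩)
      · simp at hn ⊢; omega
      · exact Finset.insert_subset_insert _ ((Finset.erase_subset _ _).trans hST)
      · intro q hq
        rcases List.mem_cons.1 hq with rfl | hq
        · refine ⟨p1, Finset.mem_insert_self _ _, ?_, ?_, ?_⟩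
          · simp [hab.symm, k3]
          · simpa [Function.update_of_ne hvb.symm] using k4
          · intro x hx hxT
            rcases Finset.mem_insert.1 hxT with e | hxT
            · exact Or.inl e
            · rcases k5 x (by rw [SimpleGraph.Walk.support_cons]; exact List.mem_cons_of_mem _ hx)
                hxT with e | e
              · exact absurd (e ▸ hx) p2
              · exact Or.inr e
        · obtain ⟨j1, j2, j3, j4, j5⟩ := h1 q (List.mem_cons_of_mem _ hq)
          have da := h2.1 q hq a (by simp)
          have dv := h2.1 q hq v (by simp)
          have e1 := SimpleGraph.Walk.start_mem_support q.2.2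
          have e2 := SimpleGraph.Walk.end_mem_support q.2.2
          have n1 : q.1 ≠ v := fun e => dv (e ▸ e1)
          have n2 : q.2.1 ≠ v := fun e => dv (e ▸ e2)
          refine ⟨j1, ?_, ?_, ?_, ?_⟩
          · simp only [Finset.mem_erase, Finset.mem_insert]
            exact Or.inr ⟨fun e => da (e ▸ e1), j2⟩
          · simp only [Finset.mem_erase, Finset.mem_insert]
            exact Or.inr ⟨fun e => da (e ▸ e2), j3⟩
          · rwa [Function.update_of_ne n1, Function.update_of_ne n2]
          · intro x hx hxT
            rcases Finset.mem_insert.1 hxT with rfl | hxT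
            · exact absurd hx dv
            · exact j5 x hx hxT
      · rw [List.pairwise_cons]
        refine ⟨fun q hq x hx => h2.1 q hq x ?_, h2.2⟩
        rw [SimpleGraph.Walk.support_cons]; exact List.mem_cons_of_mem _ hx
      · intro x hx
        rcases Finset.mem_insert.1 hx with rfl | hx
        · exact ⟨_, List.mem_cons_self, Or.inl rfl⟩
        simp only [Finset.mem_erase] at hx
        obtain ⟨q, hq, hq'⟩ := h3 x hx.2
        rcases List.mem_cons.1 hq with rfl | hq
        · exact ⟨_, List.mem_cons_self, Or.inr (hq'.resolve_left hx.1)⟩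
        · exact ⟨q, List.mem_cons_of_mem _ hq, hq'⟩

lemma matchable_subset {G : SimpleGraph V} {T : Finset V} {σ : V → ℕ} {S : Finset V}
    (h : MaderMatchable G T σ S) : S ⊆ T := by
  obtain ⟨n, a, b, p, h1, h2, h3⟩ := h
  intro x hx
  obtain ⟨i, rfl | rfl⟩ := (h3 x).1 hx
  · exact (h1 i).2.1
  · exact (h1 i).2.2.1

lemma pk_of_matchable {G : SimpleGraph V} {T : Finset V} {σ : V → ℕ} {S : Finset V}
    (h : MaderMatchable G T σ S) : Pk G S T (fun v => (σ v : ℚ)) := by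
  have hST := matchable_subset h
  obtain ⟨n, a, b, p, h1, h2, h3⟩ := h
  refine pk_of_packL G _ S T _ (List.ofFn fun i => ⟨a i, b i, p i⟩) le_rfl hST ⟨?_, ?_, ?_⟩
  · intro q hq
    obtain ⟨i, rfl⟩ := List.mem_ofFn.1 hq
    obtain ⟨k1, k2, k3, k4, k5⟩ := h1 i
    exact ⟨k1, (h3 _).2 ⟨i, Or.inl rfl⟩, (h3 _).2 ⟨i, Or.inr rfl⟩, fun e => k4 (Nat.cast_injective e), k5⟩
  · rw [List.pairwise_ofFn]
    intro i j hij x hx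
    exact h2 i j hij.ne x hx
  · intro x hx
    obtain ⟨i, hi⟩ := (h3 x).1 hx
    exact ⟨_, List.mem_ofFn.2 ⟨i, rfl⟩, hi⟩

lemma matchable_of_pk {G : SimpleGraph V} {T : Finset V} {σ : V → ℕ} {S : Finset V}
    (hST : S ⊆ T) (h : Pk G S T (fun v => (σ v : ℚ))) : MaderMatchable G T σ S := by
  obtain ⟨L, h1, h2, h3⟩ := packL_of_pk G h hST
  refine ⟨L.length, fun i => (L.get i).1, fun i => (L.get i).2.1, fun i => (L.get i).2.2,
    ?_, ?_, ?_⟩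
  · intro i
    obtain ⟨k1, k2, k3, k4, k5⟩ := h1 _ (List.get_mem L i)
    exact ⟨k1, hST k2, hST k3, fun e => k4 (congrArg (Nat.cast : ℕ → ℚ) e), k5⟩
  · intro i j hij x hx hx'
    rw [List.pairwise_iff_get] at h2
    rcases lt_or_gt_of_ne hij with h | h
    · exact h2 i j h x hx hx'
    · exact h2 j i h x hx' hx
  · intro x
    constructor
    · intro hx
      obtain ⟨q, hq, hq'⟩ := h3 x hx
      obtain ⟨i, rfl⟩ := List.get_of_mem hq
      exact ⟨i, hq'⟩
    · rintro ⟨i, rfl | rfl⟩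
      · exact (h1 _ (List.get_mem L i)).2.1
      · exact (h1 _ (List.get_mem L i)).2.2.1

end Mader

/-- The Mader delta-matroid.
For a graph `G`, terminals `T`, and a partition of `T` (given by the block-labelling
`σ`), the family of Mader matchable subsets of `T` contains `∅` and satisfies the
symmetric exchange axiom; hence it is a delta-matroid. -/
theorem stmt_10 {V : Type*} [Fintype V] [DecidableEq V]
    (G : SimpleGraph V) (T : Finset V) (σ : V → ℕ) :
    MaderMatchable G T σ ∅ ∧
    ∀ A B : Finset V, MaderMatchable G T σ A → MaderMatchable G T σ B →
      ∀ x ∈ A ∆ B, ∃ y ∈ A ∆ B, MaderMatchable G T σ (A ∆ ({x, y} : Finset V)) := by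
  refine ⟨Mader.matchable_of_pk (by simp) (Mader.Pk.nil _ _), ?_⟩
  intro A B hA hB x hx
  have hAT := Mader.matchable_subset hA
  have hBT := Mader.matchable_subset hB
  obtain ⟨m, hm, hmG, hmN⟩ := Mader.nondeg_of_pk G (Mader.pk_of_matchable hA) hAT
  obtain ⟨m', hm', hmG', hmN'⟩ := Mader.nondeg_of_pk G (Mader.pk_of_matchable hB) hBT
  obtain ⟨t, hNA, hNB⟩ := Mader.common hmN hmN'
  have hsymm : (m + t • (m' - m)).IsSymm := hm.add ((hm'.sub hm).smul t)
  have hadj : ∀ x y, x ≠ y → (m + t • (m' - m)) x y ≠ 0 → G.Adj x y := by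
    intro x y hxy h
    by_contra hn
    have e : m x y = 0 := by by_contra h0; exact hn (hmG x y hxy h0)
    have e' : m' x y = 0 := by by_contra h0; exact hn (hmG' x y hxy h0)
    apply h
    simp [e, e']
  obtain ⟨y, hy, hyN⟩ := Mader.exchange hsymm hAT hBT hNA hNB hx
  have sub : ∀ z ∈ A ∆ B, z ∈ T := by
    intro z hz
    rcases Finset.mem_symmDiff.1 hz with h | h
    · exact hAT h.1
    · exact hBT h.1
  have hsub : A ∆ ({x, y} : Finset V) ⊆ T := by
    intro z hz
    rcases Finset.mem_symmDiff.1 hz with h | h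
    · exact hAT h.1
    · rcases Finset.mem_insert.1 h.1 with e | e
      · rw [e]; exact sub x hx
      · rw [Finset.mem_singleton.1 e]; exact sub y hy
  exact ⟨y, hy, Mader.matchable_of_pk hsub (Mader.pk_of_nondeg G hsymm hadj _ _ _ _ le_rfl hsub hyN)⟩
end

section
/- Let G be a finite simple graph, T ⊆ V(G) a set of terminals, and 𝒯 a partition of T. Then there exist a field F and a skew-symmetric matrix A over F indexed by T such that for every S ⊆ T: the principal submatrix A[S] is nonsingular if and only if S is Mader matchable in (G,𝒯). In other words, the Mader delta-matroid of (G,𝒯) admits a direct linear representation by a skew-symmetric matrix. -/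
namespace MaderAux
set_option linter.unusedSectionVars false
variable {V : Type*} [Fintype V] [DecidableEq V]

/-- Kernel vectors of the skew form restricted to terminals `S`, free vertices `N`. -/
structure Ker (X : V → V → ℝ) (S N : Finset V) (c : V → ℝ) (y0 y1 : V → ℝ) : Prop where
  out : ∀ v, v ∉ S → v ∉ N → y0 v = 0 ∧ y1 v = 0
  line : ∀ v ∈ S, y1 v = c v * y0 v
  free : ∀ v ∈ N, ∑ u, X v u * y0 u = 0 ∧ ∑ u, X v u * y1 u = 0
  term : ∀ v ∈ S, ∑ u, X v u * (y1 u - c v * y0 u) = 0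

/-- The form is nonsingular. -/
def NS (X : V → V → ℝ) (S N : Finset V) (c : V → ℝ) : Prop :=
  ∀ y0 y1, Ker X S N c y0 y1 → y0 = 0 ∧ y1 = 0

/-- Recursive packings. -/
inductive Pk (G : SimpleGraph V) : Finset V → Finset V → (V → ℝ) → Prop
  | nil (N c) : Pk G ∅ N c
  | edge (S N c) (s t : V) : s ∈ S → t ∈ S → G.Adj s t → c s ≠ c t →
      Pk G ((S.erase s).erase t) N c → Pk G S N c
  | step (S N c) (s v : V) : s ∈ S → v ∈ N → G.Adj s v →
      Pk G (insert v (S.erase s)) (N.erase v) (Function.update c v (c s)) → Pk G S N c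

lemma exists_dual (X : V → V → ℝ) (S N : Finset V) (hd : Disjoint S N) (c : V → ℝ)
    (h : NS X S N c) (s : V) (hs : s ∈ S) : ∃ y0 y1 : V → ℝ,
      (∀ v, v ∉ S → v ∉ N → y0 v = 0 ∧ y1 v = 0) ∧
      (∀ v ∈ S, y1 v = c v * y0 v) ∧
      (∀ v ∈ N, ∑ u, X v u * y0 u = 0 ∧ ∑ u, X v u * y1 u = 0) ∧
      (∀ v ∈ S, v ≠ s → ∑ u, X v u * (y1 u - c v * y0 u) = 0) ∧
      ∑ u, X s u * (y1 u - c s * y0 u) = 1 := by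
  classical
  let Φ : ((V → ℝ) × (V → ℝ)) →ₗ[ℝ] ((V → ℝ) × (V → ℝ)) :=
    { toFun := fun y =>
        (fun v => if v ∈ S then y.2 v - c v * y.1 v else
            if v ∈ N then ∑ u, X v u * y.1 u else y.1 v,
         fun v => if v ∈ S then ∑ u, X v u * (y.2 u - c v * y.1 u) else
            if v ∈ N then ∑ u, X v u * y.2 u else y.2 v)
      map_add' := by
        intro y z
        ext v
        · by_cases h1 : v ∈ S <;> by_cases h2 : v ∈ N <;> simp [h1, h2, mul_add, Finset.sum_add_distrib] <;> ring
        · by_cases h1 : v ∈ S <;> by_cases h2 : v ∈ N <;>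
            simp [h1, h2, mul_add, Finset.sum_add_distrib] <;>
            (rw [← Finset.sum_add_distrib]; exact Finset.sum_congr rfl (fun _ _ => by ring))
      map_smul' := by
        intro a y
        ext v
        · by_cases h1 : v ∈ S <;> by_cases h2 : v ∈ N <;> simp [h1, h2, Finset.mul_sum] <;>
           first | exact Finset.sum_congr rfl (fun _ _ => by ring) | ring
        · by_cases h1 : v ∈ S <;> by_cases h2 : v ∈ N <;> simp [h1, h2, Finset.mul_sum] <;>
           exact Finset.sum_congr rfl (fun _ _ => by ring) }
  have hinj : Function.Injective Φ := by
    rw [injective_iff_map_eq_zero]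
    rintro ⟨y0, y1⟩ hy
    have e1 : ∀ v, (if v ∈ S then y1 v - c v * y0 v else
            if v ∈ N then ∑ u, X v u * y0 u else y0 v) = 0 := fun v => congrFun (congrArg Prod.fst hy) v
    have e2 : ∀ v, (if v ∈ S then ∑ u, X v u * (y1 u - c v * y0 u) else
            if v ∈ N then ∑ u, X v u * y1 u else y1 v) = 0 := fun v => congrFun (congrArg Prod.snd hy) v
    have := h y0 y1 ⟨?_, ?_, ?_, ?_⟩
    · rw [this.1, this.2]; rfl
    · intro v h1 h2
      have := e1 v; have := e2 v; simp_all
    · intro v h1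
      have := e1 v; simp only [h1, if_true] at this; linarith
    · intro v h1
      have h2 : v ∉ S := fun h => Finset.disjoint_left.1 hd h h1
      have a1 := e1 v; have a2 := e2 v; simp only [h1, h2, if_true, if_false] at a1 a2
      exact ⟨a1, a2⟩
    · intro v h1
      have := e2 v; simpa only [h1, if_true] using this
  obtain ⟨⟨y0, y1⟩, hy⟩ := (LinearMap.injective_iff_surjective.1 hinj) (0, Pi.single s 1)
  have e1 : ∀ v, (if v ∈ S then y1 v - c v * y0 v else
            if v ∈ N then ∑ u, X v u * y0 u else y0 v) = 0 := fun v => congrFun (congrArg Prod.fst hy) v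
  have e2 : ∀ v, (if v ∈ S then ∑ u, X v u * (y1 u - c v * y0 u) else
            if v ∈ N then ∑ u, X v u * y1 u else y1 v) = (Pi.single s 1 : V → ℝ) v :=
    fun v => congrFun (congrArg Prod.snd hy) v
  refine ⟨y0, y1, ?_, ?_, ?_, ?_, ?_⟩
  · intro v h1 h2
    have a1 := e1 v; have a2 := e2 v
    have : v ≠ s := fun h => h1 (h ▸ hs)
    simp_all
  · intro v h1
    have := e1 v; simp only [h1, if_true] at this; linarith
  · intro v h1
    have h2 : v ∉ S := fun h => Finset.disjoint_left.1 hd h h1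
    have : v ≠ s := fun h => h2 (h ▸ hs)
    have a1 := e1 v; have a2 := e2 v; simp only [h1, h2, if_true, if_false] at a1 a2
    exact ⟨a1, by simpa [this] using a2⟩
  · intro v h1 h2
    have := e2 v; simpa [h1, h2] using this
  · have := e2 s; simpa [hs] using this

/-- the form, grouped by its first argument -/
lemma form_skew (X : V → V → ℝ) (hX : ∀ u v, X u v = X v u) (y0 y1 z0 z1 : V → ℝ) :
    ∑ v, (y0 v * ∑ u, X v u * z1 u - y1 v * ∑ u, X v u * z0 u) =
    - ∑ v, (z0 v * ∑ u, X v u * y1 u - z1 v * ∑ u, X v u * y0 u) := by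
  simp only [Finset.sum_sub_distrib, Finset.mul_sum]
  rw [Finset.sum_comm, Finset.sum_comm (f := fun v u => y1 v * (X v u * z0 u))]
  rw [neg_sub]
  congr 1 <;> refine Finset.sum_congr rfl fun v _ => Finset.sum_congr rfl fun u _ => ?_
  · rw [hX u v]; ring
  · rw [hX u v]; ring

lemma term_eq (X : V → V → ℝ) (z0 z1 : V → ℝ) (a : ℝ) (v : V) :
    ∑ u, X v u * (z1 u - a * z0 u) = ∑ u, X v u * z1 u - a * ∑ u, X v u * z0 u := by
  rw [Finset.mul_sum, ← Finset.sum_sub_distrib]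
  exact Finset.sum_congr rfl fun _ _ => by ring

lemma pk_of_ns (G : SimpleGraph V) (X : V → V → ℝ) (hX : ∀ u v, X u v = X v u)
    (hG : ∀ u v, u ≠ v → ¬ G.Adj u v → X u v = 0) :
    ∀ (n : ℕ) (S N : Finset V) (c : V → ℝ), 2 * N.card + S.card ≤ n → Disjoint S N → NS X S N c →
      Pk G S N c := by
  intro n
  induction n with
  | zero =>
    intro S N c hn _ _
    have : S = ∅ := by rw [← Finset.card_eq_zero]; omega
    subst this; exact Pk.nil _ _
  | succ n ih =>
    intro S N c hn hd h
    rcases S.eq_empty_or_nonempty with rfl | ⟨s, hs⟩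
    · exact Pk.nil _ _
    obtain ⟨y0, y1, hout, hline, hfree, hterm, hone⟩ := exists_dual X S N hd c h s hs
    -- pairing any admissible vector with y
    have hpair : ∀ z0 z1 : V → ℝ, (∀ v, v ∉ S → v ∉ N → z0 v = 0 ∧ z1 v = 0) →
        (∀ v ∈ S, z1 v = c v * z0 v) →
        ∑ v, (z0 v * ∑ u, X v u * y1 u - z1 v * ∑ u, X v u * y0 u) = z0 s := by
      intro z0 z1 ho hl
      rw [Finset.sum_eq_single s]
      · rw [hl s hs]
        rw [term_eq] at hone
        linear_combination z0 s * hone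
      · intro v _ hvs
        by_cases h1 : v ∈ S
        · rw [hl v h1]
          have := hterm v h1 hvs
          rw [term_eq] at this
          linear_combination z0 v * this
        · by_cases h2 : v ∈ N
          · simp [hfree v h2]
          · simp [ho v h1 h2]
      · simp
    have hys : y0 s = 0 := by
      have h1 := hpair y0 y1 hout hline
      have h2 := form_skew X hX y0 y1 y0 y1
      linarith
    have hys1 : y1 s = 0 := by rw [hline s hs, hys, mul_zero]
    obtain ⟨u, -, hu⟩ : ∃ u ∈ Finset.univ, X s u * (y1 u - c s * y0 u) ≠ 0 :=
      Finset.exists_ne_zero_of_sum_ne_zero (by rw [hone]; exact one_ne_zero)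
    have hu1 : X s u ≠ 0 := left_ne_zero_of_mul hu
    have hu2 : y1 u - c s * y0 u ≠ 0 := right_ne_zero_of_mul hu
    have hus : u ≠ s := by
      rintro rfl
      apply hu2; rw [hys, hys1]; ring
    have hadj : G.Adj s u := by
      by_contra hc
      exact hu1 (hG s u hus.symm hc)
    -- common final step
    have key : ∀ z0 z1 : V → ℝ, (∀ v, v ∉ S → v ∉ N → z0 v = 0 ∧ z1 v = 0) →
        (∀ v ∈ S, z1 v = c v * z0 v) →
        (∀ v ∈ N, ∑ u, X v u * z0 u = 0 ∧ ∑ u, X v u * z1 u = 0) →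
        (∀ v ∈ S, v ≠ s → ∑ u, X v u * (z1 u - c v * z0 u) = 0) →
        z1 u - c s * z0 u = 0 → z0 = 0 ∧ z1 = 0 := by
      intro z0 z1 ho hl hf ht hz
      set α := ∑ u, X s u * (z1 u - c s * z0 u) with hα
      have hk : Ker X S N c (fun v => z0 v - α * y0 v) (fun v => z1 v - α * y1 v) := by
        have hlin : ∀ (v : V) (z y : V → ℝ), ∑ u, X v u * (z u - α * y u) =
            ∑ u, X v u * z u - α * ∑ u, X v u * y u := fun v z y => term_eq X y z α v
        refine ⟨?_, ?_, ?_, ?_⟩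
        · intro v h1 h2
          simp [ho v h1 h2, hout v h1 h2]
        · intro v h1
          simp only [hl v h1, hline v h1]; ring
        · intro v h1
          simp only [hlin]
          simp [hf v h1, hfree v h1]
        · intro v h1
          rw [term_eq, hlin, hlin]
          by_cases hvs : v = s
          · subst hvs
            rw [term_eq] at hone hα
            linear_combination -α * hone - hα
          · have a1 := ht v h1 hvs
            have a2 := hterm v h1 hvs
            rw [term_eq] at a1 a2
            linear_combination a1 - α * a2
      obtain ⟨e0, e1⟩ := h _ _ hk
      have e0' : ∀ v, z0 v = α * y0 v := fun v => sub_eq_zero.1 (congrFun e0 v)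
      have e1' : ∀ v, z1 v = α * y1 v := fun v => sub_eq_zero.1 (congrFun e1 v)
      have hα0 : α = 0 := by
        rw [e0', e1'] at hz
        have : α * (y1 u - c s * y0 u) = 0 := by linear_combination hz
        exact (mul_eq_zero.1 this).resolve_right hu2
      constructor
      · ext v; rw [e0', hα0]; simp
      · ext v; rw [e1', hα0]; simp
    by_cases huS : u ∈ S
    · have hyu : y1 u = c u * y0 u := hline u huS
      have hc : c s ≠ c u := by
        intro hc; apply hu2; rw [hyu, hc]; ring
      have hy0 : y0 u ≠ 0 := by
        intro hc; apply hu2; rw [hyu, hc]; ring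
      refine Pk.edge S N c s u hs huS hadj hc (ih _ _ _ ?_ ?_ ?_)
      · have : ((S.erase s).erase u).card < S.card :=
          lt_of_le_of_lt (Finset.card_le_card (Finset.erase_subset _ _)) (Finset.card_erase_lt_of_mem hs)
        omega
      · exact Finset.disjoint_of_subset_left ((Finset.erase_subset _ _).trans (Finset.erase_subset _ _)) hd
      · intro z0 z1 hk
        have hzs : z0 s = 0 ∧ z1 s = 0 :=
          hk.out s (by simp) (fun h' => Finset.disjoint_left.1 hd hs h')
        have hzu : z0 u = 0 ∧ z1 u = 0 :=
          hk.out u (by simp) (fun h' => Finset.disjoint_left.1 hd huS h')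
        have ho : ∀ v, v ∉ S → v ∉ N → z0 v = 0 ∧ z1 v = 0 := fun v h1 h2 =>
          hk.out v (by simp [h1]) h2
        have hl : ∀ v ∈ S, z1 v = c v * z0 v := by
          intro v h1
          by_cases hvs : v = s
          · subst hvs; simp [hzs]
          by_cases hvu : v = u
          · subst hvu; simp [hzu]
          exact hk.line v (by simp [*])
        have htu : ∑ w, X u w * (z1 w - c u * z0 w) = 0 := by
          have h1 := form_skew X hX y0 y1 z0 z1
          rw [hpair z0 z1 ho hl, hzs.1, Finset.sum_eq_single u] at h1
          · rw [hyu] at h1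
            have : y0 u * ∑ w, X u w * (z1 w - c u * z0 w) = 0 := by
              rw [term_eq]; linear_combination h1
            exact (mul_eq_zero.1 this).resolve_left hy0
          · intro v _ hvu
            by_cases hvs : v = s
            · subst hvs; simp [hys, hys1]
            by_cases h1 : v ∈ S
            · have := hk.term v (by simp [*])
              rw [term_eq] at this
              rw [hline v h1]; linear_combination y0 v * this
            · by_cases h2 : v ∈ N
              · simp [hk.free v h2]
              · simp [hout v h1 h2]
          · simp
        refine key z0 z1 ho hl hk.free ?_ (by simp [hzu])
        intro v h1 hvs
        by_cases hvu : v = u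
        · subst hvu; exact htu
        · exact hk.term v (by simp [*])
    · have huN : u ∈ N := by
        by_contra h2
        apply hu2; simp [hout u huS h2]
      refine Pk.step S N c s u hs huN hadj (ih _ _ _ ?_ ?_ ?_)
      · have h1 := Finset.card_insert_le u (S.erase s)
        have h2 := Finset.card_erase_lt_of_mem hs
        have h3 := Finset.card_erase_lt_of_mem huN
        omega
      · rw [Finset.disjoint_left]
        intro v h1 h2
        simp only [Finset.mem_insert, Finset.mem_erase] at h1 h2
        rcases h1 with h1 | h1
        · exact h2.1 h1
        · exact Finset.disjoint_left.1 hd h1.2 h2.2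
      · intro z0 z1 hk
        have hzs : z0 s = 0 ∧ z1 s = 0 :=
          hk.out s (by simp [hus.symm]) (fun h' => Finset.disjoint_left.1 hd hs (Finset.mem_of_mem_erase h'))
        have hzu : z1 u = c s * z0 u := by
          have := hk.line u (by simp)
          simpa using this
        have ho : ∀ v, v ∉ S → v ∉ N → z0 v = 0 ∧ z1 v = 0 := fun v h1 h2 =>
          hk.out v (by
            have : v ≠ u := fun h' => h2 (h' ▸ huN)
            simp [h1, this]) (by simp [h2])
        have hl' : ∀ v ∈ S, v ≠ s → z1 v = c v * z0 v := by
          intro v h1 hvs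
          have hvu : v ≠ u := fun h' => huS (h' ▸ h1)
          have := hk.line v (by simp [*])
          simpa [hvu] using this
        have hl : ∀ v ∈ S, z1 v = c v * z0 v := by
          intro v h1
          by_cases hvs : v = s
          · subst hvs; simp [hzs]
          exact hl' v h1 hvs
        have htv : ∀ v ∈ S, v ≠ s → ∑ u, X v u * (z1 u - c v * z0 u) = 0 := by
          intro v h1 hvs
          have hvu : v ≠ u := fun h' => huS (h' ▸ h1)
          have := hk.term v (by simp [*])
          simpa [hvu] using this
        have htu : ∑ w, X u w * z1 w - c s * ∑ w, X u w * z0 w = 0 := by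
          have := hk.term u (by simp)
          rw [term_eq] at this
          simpa using this
        have hfu : ∑ w, X u w * z0 w = 0 := by
          have h1 := form_skew X hX y0 y1 z0 z1
          rw [hpair z0 z1 ho hl, hzs.1, Finset.sum_eq_single u] at h1
          · have : (y1 u - c s * y0 u) * ∑ w, X u w * z0 w = 0 := by
              linear_combination -h1 + y0 u * htu
            exact (mul_eq_zero.1 this).resolve_left hu2
          · intro v _ hvu
            by_cases hvs : v = s
            · subst hvs; simp [hys, hys1]
            by_cases h1 : v ∈ S
            · have := htv v h1 hvs
              rw [term_eq] at this
              rw [hline v h1]; linear_combination y0 v * this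
            · by_cases h2 : v ∈ N
              · simp [hk.free v (by simp [*])]
              · simp [hout v h1 h2]
          · simp
        refine key z0 z1 ho hl ?_ htv (by rw [hzu]; ring)
        intro v h2
        by_cases hvu : v = u
        · subst hvu
          exact ⟨hfu, by rw [hfu] at htu; linarith⟩
        · exact hk.free v (by simp [*])
/-- A bundled walk. -/
abbrev BW (G : SimpleGraph V) := (u : V) × (v : V) × G.Walk u v

/-- A bundled walk is good with respect to `(S, N, c)`. -/
structure Good (G : SimpleGraph V) (S N : Finset V) (c : V → ℝ) (w : BW G) : Prop where
  path : w.2.2.IsPath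
  ne : c w.1 ≠ c w.2.1
  sub : ∀ x ∈ w.2.2.support, x ∈ S ∨ x ∈ N
  ends : ∀ x ∈ w.2.2.support, x ∈ S → x = w.1 ∨ x = w.2.1

lemma reroot {G : SimpleGraph V} {S N : Finset V} {c : V → ℝ} {w : BW G} (h : Good G S N c w)
    (v : V) (hv : v = w.1 ∨ v = w.2.1) : ∃ (t : V) (r : G.Walk v t), r.IsPath ∧ c v ≠ c t ∧
      (∀ x, x ∈ r.support ↔ x ∈ w.2.2.support) ∧ (∀ x, (x = v ∨ x = t) ↔ (x = w.1 ∨ x = w.2.1)) := by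
  obtain ⟨a, b, p⟩ := w
  rcases hv with rfl | rfl
  · exact ⟨b, p, h.path, h.ne, fun x => Iff.rfl, fun x => Iff.rfl⟩
  · refine ⟨a, p.reverse, h.path.reverse, h.ne.symm, fun x => by simp, fun x => or_comm⟩

lemma packing_of_pk {G : SimpleGraph V} {S N : Finset V} {c : V → ℝ} (h : Pk G S N c) :
    Disjoint S N → ∃ (n : ℕ) (q : Fin n → BW G), (∀ i, Good G S N c (q i)) ∧
      (∀ i j, i ≠ j → ∀ x, x ∈ (q i).2.2.support → x ∉ (q j).2.2.support) ∧
      (∀ x, x ∈ S ↔ ∃ i, x = (q i).1 ∨ x = (q i).2.1) := by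
  induction h with
  | nil N c =>
    intro _
    exact ⟨0, Fin.elim0, fun i => i.elim0, fun i => i.elim0, by simp⟩
  | edge S N c s t hs ht hadj hc _ ih =>
    intro hd
    obtain ⟨n, q, hg, hdis, hS⟩ := ih (Finset.disjoint_of_subset_left
      ((Finset.erase_subset _ _).trans (Finset.erase_subset _ _)) hd)
    have hst : s ≠ t := hadj.ne
    have hsN : s ∉ N := fun h' => Finset.disjoint_left.1 hd hs h'
    have htN : t ∉ N := fun h' => Finset.disjoint_left.1 hd ht h'
    have hnot : ∀ i x, x ∈ (q i).2.2.support → x ≠ s ∧ x ≠ t := by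
      intro i x hx
      have := (hg i).sub x hx
      constructor <;> rintro rfl <;> simp_all
    obtain ⟨Q, hQ0, hQs⟩ : ∃ Q : Fin (n + 1) → BW G, Q 0 = ⟨s, t, hadj.toWalk⟩ ∧
        ∀ i : Fin n, Q i.succ = q i :=
      ⟨Fin.cons (α := fun _ => BW G) ⟨s, t, hadj.toWalk⟩ q, rfl, fun _ => rfl⟩
    refine ⟨n + 1, Q, ?_, ?_, ?_⟩
    · intro i
      refine Fin.cases ?_ (fun i => ?_) i
      · rw [hQ0]
        refine ⟨?_, hc, ?_, ?_⟩
        · simp [hst]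
        · simp [hs, ht]
        · simp
      · rw [hQs]
        refine ⟨(hg i).path, (hg i).ne, ?_, ?_⟩
        · intro x hx
          have := (hg i).sub x hx
          simp only [Finset.mem_erase] at this
          tauto
        · intro x hx hxS
          exact (hg i).ends x hx (by simp [hnot i x hx, hxS])
    · intro i j
      refine Fin.cases ?_ (fun i => ?_) i <;> refine Fin.cases ?_ (fun j => ?_) j
      · simp
      · intro _ x hx hx'
        rw [hQs] at hx'
        rw [hQ0] at hx
        have := hnot j x hx'
        simp at hx
        tauto
      · intro _ x hx hx'
        rw [hQs] at hx
        rw [hQ0] at hx'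
        have := hnot i x hx
        simp at hx'
        tauto
      · intro hij x hx
        rw [hQs] at hx ⊢
        exact hdis i j (fun h => hij (by rw [h])) x hx
    · intro x
      rw [Fin.exists_fin_succ]
      have ha0 : (Q 0).1 = s := by rw [hQ0]
      have hb0 : (Q 0).2.1 = t := by rw [hQ0]
      have has : ∀ i : Fin n, (Q i.succ).1 = (q i).1 := fun i => by rw [hQs]
      have hbs : ∀ i : Fin n, (Q i.succ).2.1 = (q i).2.1 := fun i => by rw [hQs]
      simp only [ha0, hb0, has, hbs]
      rw [← hS x]
      simp only [Finset.mem_erase]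
      by_cases h1 : x = s
      · subst h1; simp [hs]
      · by_cases h2 : x = t
        · subst h2; simp [ht]
        · simp [h1, h2]
  | step S N c s v hs hv hadj _ ih =>
    intro hd
    have hvS : v ∉ S := fun h' => Finset.disjoint_left.1 hd h' hv
    have hsN : s ∉ N := fun h' => Finset.disjoint_left.1 hd hs h'
    have hsv : s ≠ v := hadj.ne
    obtain ⟨n, q, hg, hdis, hS⟩ := ih (by
      rw [Finset.disjoint_left]
      intro x h1 h2
      simp only [Finset.mem_insert, Finset.mem_erase] at h1 h2
      rcases h1 with h1 | h1
      · exact h2.1 h1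
      · exact Finset.disjoint_left.1 hd h1.2 h2.2)
    obtain ⟨i0, hi0⟩ := (hS v).1 (by simp)
    obtain ⟨t, r, hrp, hrc, hrs, hre⟩ := reroot (hg i0) v hi0
    have hnot : ∀ i x, x ∈ (q i).2.2.support → x ≠ s := by
      intro i x hx
      have := (hg i).sub x hx
      rintro rfl
      simp_all
    have hvt : t ≠ v := by rintro rfl; exact hrc rfl
    have hvi0 : v ∈ (q i0).2.2.support := (hrs v).1 (by simp)
    have hvi : ∀ i, i ≠ i0 → v ∉ (q i).2.2.support := fun i hi h' => hdis i i0 hi v h' hvi0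
    have hcs : c s ≠ c t := by simpa [hvt] using hrc
    have hsr : s ∉ r.support := fun h' => hnot i0 s ((hrs s).1 h') rfl
    have htS : t ∈ S := by
      have := (hS t).2 ⟨i0, (hre t).1 (Or.inr rfl)⟩
      simp only [Finset.mem_insert, Finset.mem_erase] at this
      tauto
    let w : BW G := ⟨s, t, SimpleGraph.Walk.cons hadj r⟩
    have hw : ∀ x, x ∈ w.2.2.support ↔ x = s ∨ x ∈ (q i0).2.2.support := by
      intro x
      simp [w, hrs]
    have hsub : ∀ i, ∀ x ∈ (q i).2.2.support, x ∈ S ∨ x ∈ N := by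
      intro i x hx
      have := (hg i).sub x hx
      simp only [Finset.mem_insert, Finset.mem_erase] at this
      rcases this with (h1 | h1) | h1
      · subst h1; exact Or.inr hv
      · exact Or.inl h1.2
      · exact Or.inr h1.2
    have hends : ∀ i, ∀ x ∈ (q i).2.2.support, x ∈ S → x = (q i).1 ∨ x = (q i).2.1 := by
      intro i x hx hxS
      exact (hg i).ends x hx (by simp [hnot i x hx, hxS])
    refine ⟨n, Function.update q i0 w, ?_, ?_, ?_⟩
    · intro i
      by_cases hi : i = i0
      · subst hi
        rw [Function.update_self]
        refine ⟨?_, hcs, ?_, ?_⟩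
        · exact hrp.cons hsr
        · intro x hx
          rcases (hw x).1 hx with rfl | h1
          · exact Or.inl hs
          · exact hsub _ _ h1
        · intro x hx hxS
          rcases (hw x).1 hx with rfl | h1
          · exact Or.inl rfl
          · rcases (hre x).2 (hends _ x h1 hxS) with h2 | h2
            · subst h2; exact absurd hxS hvS
            · exact Or.inr h2
      · rw [Function.update_of_ne hi]
        refine ⟨(hg i).path, ?_, hsub i, hends i⟩
        have h1 : (q i).1 ≠ v := fun h' => hvi i hi (h' ▸ SimpleGraph.Walk.start_mem_support _)
        have h2 : (q i).2.1 ≠ v := fun h' => hvi i hi (h' ▸ SimpleGraph.Walk.end_mem_support _)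
        have := (hg i).ne
        simpa [h1, h2] using this
    · intro i j hij x hx hx'
      by_cases hi : i = i0
      · subst hi
        rw [Function.update_self] at hx
        rw [Function.update_of_ne hij.symm] at hx'
        rcases (hw x).1 hx with h1 | h1
        · exact hnot j x hx' h1
        · exact hdis i j hij x h1 hx'
      · by_cases hj : j = i0
        · subst hj
          rw [Function.update_self] at hx'
          rw [Function.update_of_ne hij] at hx
          rcases (hw x).1 hx' with h1 | h1
          · exact hnot i x hx h1
          · exact hdis i j hij x hx h1
        · rw [Function.update_of_ne hi] at hx
          rw [Function.update_of_ne hj] at hx'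
          exact hdis i j hij x hx hx'
    · intro x
      constructor
      · intro hxS
        by_cases hxs : x = s
        · exact ⟨i0, by rw [Function.update_self]; exact Or.inl hxs⟩
        · obtain ⟨i, hi⟩ := (hS x).1 (by simp [hxs, hxS])
          refine ⟨i, ?_⟩
          by_cases h1 : i = i0
          · subst h1
            rw [Function.update_self]
            rcases (hre x).2 hi with h2 | h2
            · subst h2; exact absurd hxS hvS
            · exact Or.inr h2
          · rwa [Function.update_of_ne h1]
      · rintro ⟨i, hi⟩
        by_cases h1 : i = i0
        · subst h1
          rw [Function.update_self] at hi
          rcases hi with h2 | h2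
          · rw [h2]; exact hs
          · rw [h2]; exact htS
        · rw [Function.update_of_ne h1] at hi
          have h2 := (hS x).2 ⟨i, hi⟩
          simp only [Finset.mem_insert, Finset.mem_erase] at h2
          rcases h2 with h2 | h2
          · exfalso
            subst h2
            apply hvi i h1
            rcases hi with hi | hi
            · rw [hi]; exact SimpleGraph.Walk.start_mem_support _
            · rw [hi]; exact SimpleGraph.Walk.end_mem_support _
          · exact h2.2

lemma matchable_of_pk (G : SimpleGraph V) (T : Finset V) (σ : V → ℕ) (S : Finset V) (hS : S ⊆ T)
    (h : Pk G S Tᶜ (fun v => (σ v : ℝ))) : MaderMatchable G T σ S := by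
  have hd : Disjoint S Tᶜ := by
    rw [Finset.disjoint_left]
    intro x h1 h2
    exact (Finset.mem_compl.1 h2) (hS h1)
  obtain ⟨n, q, hg, hdis, hE⟩ := packing_of_pk h hd
  refine ⟨n, fun i => (q i).1, fun i => (q i).2.1, fun i => (q i).2.2, ?_, hdis, hE⟩
  intro i
  refine ⟨(hg i).path, hS ((hE _).2 ⟨i, Or.inl rfl⟩), hS ((hE _).2 ⟨i, Or.inr rfl⟩), ?_, ?_⟩
  · intro h'
    exact (hg i).ne (by simp [h'])
  · intro x hx hxT
    apply (hg i).ends x hx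
    rcases (hg i).sub x hx with h1 | h1
    · exact h1
    · exact absurd hxT (Finset.mem_compl.1 h1)
lemma propagate (X : V → V → ℝ) (z : V → ℝ) (g : ℕ → V) (L : ℕ) (h0 : z (g 0) = 0)
    (heq : ∀ k < L, ∑ u, X (g k) u * z u = 0)
    (hX : ∀ k < L, X (g k) (g (k + 1)) ≠ 0)
    (hN : ∀ k < L, ∀ u, X (g k) u ≠ 0 → u = g (k + 1) ∨ ∃ j ≤ k, u = g j) :
    ∀ k ≤ L, z (g k) = 0 := by
  intro k
  induction k using Nat.strong_induction_on with
  | _ k ih =>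
    intro hk
    rcases k with _ | k
    · exact h0
    have h1 := heq k (by omega)
    rw [Finset.sum_eq_single (g (k + 1))] at h1
    · exact (mul_eq_zero.1 h1).resolve_left (hX k (by omega))
    · intro u _ hu
      by_cases hx : X (g k) u = 0
      · rw [hx, zero_mul]
      · rcases hN k (by omega) u hx with h2 | ⟨j, hj, rfl⟩
        · exact absurd h2 hu
        · rw [ih j (by omega) (by omega), mul_zero]
    · simp

lemma special (G : SimpleGraph V) (T : Finset V) (σ : V → ℕ) (S : Finset V)
    (h : MaderMatchable G T σ S) : ∃ X : V → V → ℝ, (∀ u v, X u v = X v u) ∧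
      (∀ u v, u ≠ v → ¬ G.Adj u v → X u v = 0) ∧ (∀ u, X u u = Fintype.card V + 1) ∧
      (∀ u v, u ≠ v → ‖X u v‖ ≤ 1) ∧ NS X S Tᶜ (fun v => (σ v : ℝ)) := by
  classical
  obtain ⟨n, a, b, p, hp, hdis, hS⟩ := h
  let E : V → V → Prop := fun u w => ∃ i, ∃ k < (p i).length,
    (u = (p i).getVert k ∧ w = (p i).getVert (k + 1)) ∨
    (w = (p i).getVert k ∧ u = (p i).getVert (k + 1))
  have hEs : ∀ u w, E u w → E w u := by
    rintro u w ⟨i, k, hk, h⟩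
    exact ⟨i, k, hk, h.symm⟩
  have hEadj : ∀ u w, E u w → G.Adj u w := by
    rintro u w ⟨i, k, hk, ⟨rfl, rfl⟩ | ⟨rfl, rfl⟩⟩
    · exact (p i).adj_getVert_succ hk
    · exact ((p i).adj_getVert_succ hk).symm
  let X : V → V → ℝ := fun u w => if u = w then Fintype.card V + 1 else if E u w then 1 else 0
  have hpos : (Fintype.card V + 1 : ℝ) ≠ 0 := by positivity
  have hXn : ∀ u w, X u w ≠ 0 → u = w ∨ E u w := by
    intro u w h
    by_contra hc
    push Not at hc
    simp [X, hc.1, hc.2] at h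
  have hXE : ∀ u w, E u w → X u w ≠ 0 := by
    intro u w h
    have := (hEadj u w h).ne
    simp [X, this, h]
  -- neighbours along a path
  have hnb : ∀ i, ∀ k ≤ (p i).length, ∀ u, X ((p i).getVert k) u ≠ 0 →
      u = (p i).getVert k ∨ (k < (p i).length ∧ u = (p i).getVert (k + 1)) ∨
      (0 < k ∧ u = (p i).getVert (k - 1)) := by
    intro i k hk u hu
    rcases hXn _ _ hu with h1 | ⟨j, m, hm, h1⟩
    · exact Or.inl h1.symm
    · have hij : i = j := by
        by_contra hij
        rcases h1 with h1 | h1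
        · exact hdis i j hij _ ((p i).getVert_mem_support k) (h1.1 ▸ (p j).getVert_mem_support m)
        · exact hdis i j hij _ ((p i).getVert_mem_support k) (h1.2 ▸ (p j).getVert_mem_support _)
      subst hij
      have hinj := (hp i).1.getVert_injOn
      rcases h1 with ⟨h1, h2⟩ | ⟨h2, h1⟩
      · have : k = m := hinj (show k ≤ _ from hk) (show m ≤ _ by omega) h1
        subst this
        exact Or.inr (Or.inl ⟨hm, h2⟩)
      · have : k = m + 1 := hinj (show k ≤ _ from hk) (show m + 1 ≤ _ by omega) h1
        subst this
        exact Or.inr (Or.inr ⟨by omega, h2⟩)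
  refine ⟨X, ?_, ?_, ?_, ?_, ?_⟩
  · intro u w
    have : E u w ↔ E w u := ⟨hEs _ _, hEs _ _⟩
    simp only [X, this, eq_comm]
  · intro u w h1 h2
    have : ¬ E u w := fun h => h2 (hEadj _ _ h)
    simp [X, h1, this]
  · intro u; simp [X]
  · intro u w h1
    simp only [X, h1, if_false]
    split_ifs <;> simp
  · intro y0 y1 hk
    have hinner : ∀ i, ∀ k, 0 < k → k < (p i).length → (p i).getVert k ∈ Tᶜ := by
      intro i k h1 h2
      rw [Finset.mem_compl]
      intro hT
      rcases (hp i).2.2.2.2 _ ((p i).getVert_mem_support k) hT with h3 | h3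
      · have := ((hp i).1.getVert_eq_start_iff h2.le).1 h3
        omega
      · have := ((hp i).1.getVert_eq_end_iff h2.le).1 h3
        omega
    have hinteq : ∀ i, ∀ k, 0 < k → k < (p i).length → ∀ r : ℝ,
        ∑ u, X ((p i).getVert k) u * (y1 u - r * y0 u) = 0 := by
      intro i k h1 h2 r
      have := hk.free _ (hinner i k h1 h2)
      rw [term_eq, this.1, this.2]; ring
    have haS : ∀ i, a i ∈ S := fun i => (hS _).2 ⟨i, Or.inl rfl⟩
    have hbS : ∀ i, b i ∈ S := fun i => (hS _).2 ⟨i, Or.inr rfl⟩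
    have hfw : ∀ i, ∀ k ≤ (p i).length, y1 ((p i).getVert k) - σ (a i) * y0 ((p i).getVert k) = 0 := by
      intro i
      apply propagate X (fun u => y1 u - σ (a i) * y0 u) (p i).getVert
      · have := hk.line _ (haS i)
        simp [this]
      · intro k hkl
        rcases Nat.eq_zero_or_pos k with rfl | hk0
        · have := hk.term _ (haS i)
          simpa using this
        · exact hinteq i k hk0 hkl _
      · intro k hkl
        exact hXE _ _ ⟨i, k, hkl, Or.inl ⟨rfl, rfl⟩⟩
      · intro k hkl u hu
        rcases hnb i k hkl.le u hu with h1 | h1 | h1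
        · exact Or.inr ⟨k, le_rfl, h1⟩
        · exact Or.inl h1.2
        · exact Or.inr ⟨k - 1, by omega, h1.2⟩
    have hbw : ∀ i, ∀ k ≤ (p i).length,
        y1 ((p i).getVert ((p i).length - k)) - σ (b i) * y0 ((p i).getVert ((p i).length - k)) = 0 := by
      intro i
      apply propagate X (fun u => y1 u - σ (b i) * y0 u) (fun k => (p i).getVert ((p i).length - k))
      · have := hk.line _ (hbS i)
        simp [this]
      · intro k hkl
        rcases Nat.eq_zero_or_pos k with rfl | hk0
        · have := hk.term _ (hbS i)
          simpa using this
        · exact hinteq i _ (by omega) (by omega) _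
      · intro k hkl
        refine hXE _ _ ⟨i, (p i).length - (k + 1), by omega, Or.inr ⟨rfl, ?_⟩⟩
        congr 1; omega
      · intro k hkl u hu
        rcases hnb i _ (by omega) u hu with h1 | h1 | h1
        · exact Or.inr ⟨k, le_rfl, h1⟩
        · refine Or.inr ⟨k - 1, by omega, ?_⟩
          rw [h1.2]; congr 1; omega
        · refine Or.inl ?_
          rw [h1.2]; rfl
    have hpath : ∀ i, ∀ v ∈ (p i).support, y0 v = 0 ∧ y1 v = 0 := by
      intro i v hv
      obtain ⟨k, rfl, hkl⟩ := SimpleGraph.Walk.mem_support_iff_exists_getVert.1 hv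
      have h1 := hfw i k hkl
      have h2 := hbw i ((p i).length - k) (by omega)
      have h3 : (p i).length - ((p i).length - k) = k := by omega
      rw [h3] at h2
      have h4 : (σ (a i) : ℝ) - σ (b i) ≠ 0 := by
        rw [sub_ne_zero]
        exact_mod_cast (hp i).2.2.2.1
      have h5 : ((σ (a i) : ℝ) - σ (b i)) * y0 ((p i).getVert k) = 0 := by linear_combination h2 - h1
      have h6 := (mul_eq_zero.1 h5).resolve_left h4
      exact ⟨h6, by rw [h6] at h1; linarith⟩
    have hall : ∀ v, y0 v = 0 ∧ y1 v = 0 := by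
      intro v
      by_cases hv : ∃ i, v ∈ (p i).support
      · obtain ⟨i, hi⟩ := hv
        exact hpath i v hi
      have hvS : v ∉ S := by
        intro h1
        obtain ⟨i, hi⟩ := (hS v).1 h1
        apply hv
        refine ⟨i, ?_⟩
        rcases hi with hi | hi
        · rw [hi]; exact SimpleGraph.Walk.start_mem_support _
        · rw [hi]; exact SimpleGraph.Walk.end_mem_support _
      by_cases hvN : v ∈ Tᶜ
      · have hs : ∀ y : V → ℝ, ∑ u, X v u * y u = 0 → y v = 0 := by
          intro y hy
          rw [Finset.sum_eq_single v] at hy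
          · have : X v v ≠ 0 := by simpa [X] using hpos
            exact (mul_eq_zero.1 hy).resolve_left this
          · intro u _ huv
            by_cases hx : X v u = 0
            · rw [hx, zero_mul]
            · exfalso
              rcases hXn _ _ hx with h1 | ⟨i, k, _, h1 | h1⟩
              · exact huv h1.symm
              · exact hv ⟨i, h1.1 ▸ (p i).getVert_mem_support _⟩
              · exact hv ⟨i, h1.2 ▸ (p i).getVert_mem_support _⟩
          · simp
        exact ⟨hs _ (hk.free v hvN).1, hs _ (hk.free v hvN).2⟩
      · exact hk.out v hvS hvN
    exact ⟨funext fun v => (hall v).1, funext fun v => (hall v).2⟩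
/-- The submatrix on the nonterminals. -/
def NN {R : Type*} (T : Finset V) (X : V → V → R) :
    Matrix {v // v ∉ T} {v // v ∉ T} R := Matrix.of fun i j => X i j

/-- Scaled Schur complement. -/
def LL {R : Type*} [CommRing R] (T : Finset V) (X : V → V → R) (s t : V) : R :=
  (NN T X).det * X s t - ∑ i, ∑ j, X s i.1 * (NN T X).adjugate i j * X j.1 t

/-- The representing matrix. -/
def AA {R : Type*} [CommRing R] (T : Finset V) (X : V → V → R) (c : V → R) : Matrix T T R :=
  Matrix.of fun s t => LL T X s t * (c t - c s)

lemma LL_symm {R : Type*} [CommRing R] (T : Finset V) (X : V → V → R)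
    (hX : ∀ u v, X u v = X v u) (s t : V) : LL T X s t = LL T X t s := by
  unfold LL
  have hs : (NN T X).IsSymm := by
    ext i j; exact hX _ _
  have ha := hs.adjugate
  rw [hX s t, Finset.sum_comm]
  congr 1
  refine Finset.sum_congr rfl fun i _ => Finset.sum_congr rfl fun j _ => ?_
  rw [hX s j, hX i t, ← ha.apply i j]; ring

lemma LL_map {R R' : Type*} [CommRing R] [CommRing R'] (f : R →+* R') (T : Finset V)
    (X : V → V → R) (s t : V) : f (LL T X s t) = LL T (fun u v => f (X u v)) s t := by
  have h1 : NN T (fun u v => f (X u v)) = f.mapMatrix (NN T X) := rfl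
  unfold LL
  rw [h1, ← RingHom.map_det, ← RingHom.map_adjugate]
  simp [map_sum]

lemma det_AA_map {R R' : Type*} [CommRing R] [CommRing R'] (f : R →+* R') (T : Finset V)
    (X : V → V → R) (c : V → R) (S : Finset ↥T) :
    f ((AA T X c).submatrix (fun x : ↥S => (x : ↥T)) (fun x : ↥S => (x : ↥T))).det =
    ((AA T (fun u v => f (X u v)) (fun u => f (c u))).submatrix
      (fun x : ↥S => (x : ↥T)) (fun x : ↥S => (x : ↥T))).det := by
  rw [RingHom.map_det]
  congr 1
  ext i j
  simp [AA, LL_map]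

lemma sum_split (T : Finset V) (f : V → ℝ) :
    ∑ u, f u = ∑ t : ↥T, f t + ∑ i : {v // v ∉ T}, f i := by
  rw [← Fintype.sum_subtype_add_sum_subtype (fun v => v ∈ T) f]
  congr!

lemma harm_unique (T : Finset V) (X : V → V → ℝ) (g : V → ℝ)
    (hg : ∀ v, v ∉ T → ∑ u, X v u * g u = 0) (i : {v // v ∉ T}) :
    (NN T X).det * g i = - ∑ j, (NN T X).adjugate i j * ∑ t : ↥T, X j t * g t := by
  have h1 : (NN T X).mulVec (fun i => g i) = fun j : {v // v ∉ T} => - ∑ t : ↥T, X j t * g t := by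
    ext j
    have := hg j j.2
    rw [sum_split T] at this
    simp only [Matrix.mulVec, dotProduct, NN, Matrix.of_apply]
    linarith
  have h2 := congrArg (fun w => (NN T X).adjugate.mulVec w i) h1
  simp only [Matrix.mulVec_mulVec, Matrix.adjugate_mul] at h2
  simp only [Matrix.smul_mulVec, Matrix.one_mulVec, Pi.smul_apply, smul_eq_mul] at h2
  rw [h2]
  simp [Matrix.mulVec, dotProduct]

lemma harm_term (T : Finset V) (X : V → V → ℝ) (g : V → ℝ)
    (hg : ∀ v, v ∉ T → ∑ u, X v u * g u = 0) (s : V) :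
    ∑ t : ↥T, LL T X s t * g t = (NN T X).det * ∑ u, X s u * g u := by
  rw [sum_split T (fun u => X s u * g u), mul_add]
  have h1 : (NN T X).det * ∑ i : {v // v ∉ T}, X s i * g i =
      - ∑ i : {v // v ∉ T}, ∑ j, X s i * (NN T X).adjugate i j * ∑ t : ↥T, X j t * g t := by
    rw [Finset.mul_sum, ← Finset.sum_neg_distrib]
    refine Finset.sum_congr rfl fun i _ => ?_
    have := harm_unique T X g hg i
    calc (NN T X).det * (X s i * g i) = X s i * ((NN T X).det * g i) := by ring
      _ = _ := by
        rw [this, mul_neg, Finset.mul_sum]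
        congr 1
        exact Finset.sum_congr rfl fun j _ => by ring
  rw [h1]
  simp only [LL, sub_mul, Finset.sum_sub_distrib, Finset.mul_sum, Finset.sum_mul]
  rw [← sub_eq_add_neg]
  congr 1
  · exact Finset.sum_congr rfl fun j _ => by ring
  · rw [Finset.sum_comm]
    refine Finset.sum_congr rfl fun i _ => ?_
    rw [Finset.sum_comm]
    exact Finset.sum_congr rfl fun j _ => Finset.sum_congr rfl fun t _ => by ring

lemma harm_exists (T : Finset V) (X : V → V → ℝ) (hD : (NN T X).det ≠ 0) (f : ↥T → ℝ) :
    ∃ g : V → ℝ, (∀ t : ↥T, g t = f t) ∧ ∀ v, v ∉ T → ∑ u, X v u * g u = 0 := by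
  let w : {v // v ∉ T} → ℝ := (NN T X)⁻¹.mulVec (fun j : {v // v ∉ T} => - ∑ t : ↥T, X j t * f t)
  have hw : (NN T X).mulVec w = (fun j : {v // v ∉ T} => - ∑ t : ↥T, X j t * f t) := by
    simp only [w, Matrix.mulVec_mulVec]
    rw [Matrix.mul_nonsing_inv _ (isUnit_iff_ne_zero.2 hD), Matrix.one_mulVec]
  refine ⟨fun v => if h : v ∈ T then f ⟨v, h⟩ else w ⟨v, h⟩, ?_, ?_⟩
  · intro t; simp
  · intro v hv
    rw [sum_split T]
    have h1 := congrFun hw ⟨v, hv⟩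
    simp only [Matrix.mulVec, dotProduct, NN, Matrix.of_apply] at h1
    have h2 : ∀ i : {v // v ∉ T}, (if h : (i : V) ∈ T then f ⟨i, h⟩ else w ⟨i, h⟩) = w i := by
      intro i; simp [i.2]
    simp only [h2]
    rw [h1]
    simp

lemma sum_S (T : Finset V) (S : Finset ↥T) (F h : ↥T → ℝ) (hh : ∀ t, t ∉ S → h t = 0) :
    ∑ t : ↥S, F t * h t = ∑ t : ↥T, F t * h t := by
  rw [Finset.sum_coe_sort S (fun t => F t * h t)]
  exact Finset.sum_subset (Finset.subset_univ _) (fun t _ ht => by rw [hh t ht, mul_zero])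

lemma det_iff (T : Finset V) (X : V → V → ℝ) (c : V → ℝ) (hD : (NN T X).det ≠ 0) (S : Finset ↥T) :
    ((AA T X c).submatrix (fun x : ↥S => (x : ↥T)) (fun x : ↥S => (x : ↥T))).det ≠ 0 ↔
      NS X (S.image Subtype.val) Tᶜ c := by
  have hmem : ∀ t : ↥T, (t : V) ∈ S.image Subtype.val ↔ t ∈ S := by
    intro t; simp
  constructor
  · intro hdet y0 y1 hk
    have h0 := fun v (hv : v ∉ T) => (hk.free v (Finset.mem_compl.2 hv)).1
    have h1 := fun v (hv : v ∉ T) => (hk.free v (Finset.mem_compl.2 hv)).2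
    have hout : ∀ t : ↥T, t ∉ S → y0 t = 0 ∧ y1 t = 0 := fun t ht =>
      hk.out t (by rwa [hmem]) (by simp)
    have hline : ∀ t : ↥T, y1 t = c t * y0 t := by
      intro t
      by_cases ht : t ∈ S
      · exact hk.line _ ((hmem t).2 ht)
      · simp [hout t ht]
    have hmv : ((AA T X c).submatrix (fun x : ↥S => (x : ↥T)) (fun x : ↥S => (x : ↥T))).mulVec
        (fun t => y0 t) = 0 := by
      ext s
      simp only [Matrix.mulVec, dotProduct, Matrix.submatrix_apply, Pi.zero_apply]
      rw [sum_S T S (fun t => AA T X c s t) (fun t => y0 t) (fun t ht => (hout t ht).1)]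
      have e0 := harm_term T X y0 h0 s
      have e1 := harm_term T X y1 h1 s
      have e2 := hk.term s ((hmem s).2 s.2)
      rw [term_eq] at e2
      have e3 : ∑ t : ↥T, AA T X c s t * y0 t =
          ∑ t : ↥T, LL T X s t * y1 t - c s * ∑ t : ↥T, LL T X s t * y0 t := by
        rw [Finset.mul_sum, ← Finset.sum_sub_distrib]
        refine Finset.sum_congr rfl fun t _ => ?_
        rw [hline t]; simp only [AA, Matrix.of_apply]; ring
      rw [e3, e0, e1]
      linear_combination (NN T X).det * e2
    have hz := Matrix.eq_zero_of_mulVec_eq_zero hdet hmv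
    have hT0 : ∀ t : ↥T, y0 t = 0 := by
      intro t
      by_cases ht : t ∈ S
      · exact congrFun hz ⟨t, ht⟩
      · exact (hout t ht).1
    have hT1 : ∀ t : ↥T, y1 t = 0 := fun t => by rw [hline, hT0, mul_zero]
    have hall : ∀ y : V → ℝ, (∀ v, v ∉ T → ∑ u, X v u * y u = 0) → (∀ t : ↥T, y t = 0) → y = 0 := by
      intro y hy ht
      ext v
      by_cases hv : v ∈ T
      · exact ht ⟨v, hv⟩
      · have := harm_unique T X y hy ⟨v, hv⟩
        simp only [ht, mul_zero, Finset.sum_const_zero, neg_zero] at this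
        exact (mul_eq_zero.1 this).resolve_left hD
    exact ⟨hall y0 h0 hT0, hall y1 h1 hT1⟩
  · intro hns hdet
    obtain ⟨a, ha, hmv⟩ := Matrix.exists_mulVec_eq_zero_iff.2 hdet
    let f0 : ↥T → ℝ := fun t => if h : t ∈ S then a ⟨t, h⟩ else 0
    have hf0 : ∀ t : ↥S, f0 t = a t := by intro t; simp [f0]
    have hf0' : ∀ t, t ∉ S → f0 t = 0 := by intro t ht; simp [f0, ht]
    obtain ⟨g0, hg0, h0⟩ := harm_exists T X hD f0
    obtain ⟨g1, hg1, h1⟩ := harm_exists T X hD (fun t => c t * f0 t)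
    have hk : Ker X (S.image Subtype.val) Tᶜ c g0 g1 := by
      refine ⟨?_, ?_, ?_, ?_⟩
      · intro v hv hv'
        have hvT : v ∈ T := by simpa using hv'
        have : (⟨v, hvT⟩ : ↥T) ∉ S := by rw [← hmem]; exact hv
        have e0 := hg0 ⟨v, hvT⟩
        have e1 := hg1 ⟨v, hvT⟩
        rw [hf0' _ this] at e0 e1
        exact ⟨e0, by simpa using e1⟩
      · intro v hv
        obtain ⟨t, _, rfl⟩ := Finset.mem_image.1 hv
        rw [hg0, hg1]
      · intro v hv
        exact ⟨h0 v (Finset.mem_compl.1 hv), h1 v (Finset.mem_compl.1 hv)⟩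
      · intro v hv
        obtain ⟨s, hs, rfl⟩ := Finset.mem_image.1 hv
        have e := congrFun hmv ⟨s, hs⟩
        simp only [Matrix.mulVec, dotProduct, Matrix.submatrix_apply, Pi.zero_apply] at e
        simp only [← hf0] at e
        rw [sum_S T S (fun t => AA T X c s t) f0 hf0'] at e
        have e0 := harm_term T X g0 h0 s
        have e1 := harm_term T X g1 h1 s
        have e3 : ∑ t : ↥T, AA T X c s t * f0 t =
            ∑ t : ↥T, LL T X s t * g1 t - c s * ∑ t : ↥T, LL T X s t * g0 t := by
          rw [Finset.mul_sum, ← Finset.sum_sub_distrib]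
          refine Finset.sum_congr rfl fun t _ => ?_
          rw [hg0, hg1]; simp only [AA, Matrix.of_apply]; ring
        rw [e3, e0, e1] at e
        rw [term_eq]
        have : (NN T X).det * (∑ u, X s u * g1 u - c s * ∑ u, X s u * g0 u) = 0 := by
          linear_combination e
        exact (mul_eq_zero.1 this).resolve_left hD
    obtain ⟨z0, _⟩ := hns g0 g1 hk
    apply ha
    ext t
    rw [← hf0, ← hg0, z0]; rfl

end MaderAux

/-- Direct linear representation of the Mader delta-matroid.
For a graph `G`, terminals `T`, and a partition of `T` (given by the block-labelling
`σ`), there exist a field `F` and a skew-symmetric matrix `A` indexed by `T` such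
that for every `S ⊆ T`, the principal submatrix `A[S]` is nonsingular iff `S` is
Mader matchable in `(G, 𝒯)`. -/
theorem stmt_11 {V : Type*} [Fintype V] [DecidableEq V]
    (G : SimpleGraph V) (T : Finset V) (σ : V → ℕ) :
    ∃ (F : Type) (_ : Field F) (A : Matrix ↥T ↥T F),
      (∀ u v : ↥T, A u v = - A v u) ∧ (∀ v : ↥T, A v v = 0) ∧
      ∀ S : Finset ↥T,
        (A.submatrix (fun x : ↥S => (x : ↥T)) (fun x : ↥S => (x : ↥T))).det ≠ 0 ↔
          MaderMatchable G T σ (S.image Subtype.val) := by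
  classical
  let c : V → ℝ := fun v => (σ v : ℝ)
  let Xp : V → V → MvPolynomial (Sym2 V) ℝ := fun u v =>
    if u = v ∨ G.Adj u v then MvPolynomial.X s(u, v) else 0
  let cp : V → MvPolynomial (Sym2 V) ℝ := fun v => MvPolynomial.C (c v)
  let P : Finset ↥T → MvPolynomial (Sym2 V) ℝ := fun S =>
    ((MaderAux.AA T Xp cp).submatrix (fun x : ↥S => (x : ↥T)) (fun x : ↥S => (x : ↥T))).det
  let ev : (Sym2 V → ℝ) → V → V → ℝ := fun x u v => MvPolynomial.eval x (Xp u v)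
  have hevP : ∀ x S, MvPolynomial.eval x (P S) = ((MaderAux.AA T (ev x) c).submatrix
      (fun x : ↥S => (x : ↥T)) (fun x : ↥S => (x : ↥T))).det := by
    intro x S
    have := MaderAux.det_AA_map (MvPolynomial.eval x) T Xp cp S
    simpa [cp, ev, P] using this
  have hevD : ∀ x, MvPolynomial.eval x (MaderAux.NN T Xp).det = (MaderAux.NN T (ev x)).det := by
    intro x
    rw [RingHom.map_det]
    rfl
  have hsymm : ∀ x u v, ev x u v = ev x v u := by
    intro x u v
    simp only [ev, Xp, G.adj_comm u v, eq_comm (a := u), Sym2.eq_swap (a := u)]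
  have hsupp : ∀ x u v, u ≠ v → ¬ G.Adj u v → ev x u v = 0 := by
    intro x u v h1 h2
    simp [ev, Xp, h1, h2]
  have hmatch : ∀ S : Finset ↥T, MaderMatchable G T σ (S.image Subtype.val) →
      ∃ x, (MaderAux.NN T (ev x)).det ≠ 0 ∧ MvPolynomial.eval x (P S) ≠ 0 := by
    intro S hS
    obtain ⟨X, hX1, hX2, hX3, hX4, hX5⟩ := MaderAux.special G T σ _ hS
    have hx : ev (Sym2.lift ⟨X, hX1⟩) = X := by
      ext u v
      by_cases h : u = v ∨ G.Adj u v
      · simp [ev, Xp, h]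
      · have h' := h
        push Not at h'
        simp [ev, Xp, h, hX2 u v h'.1 h'.2]
    have hD : (MaderAux.NN T X).det ≠ 0 := by
      apply det_ne_zero_of_sum_row_lt_diag
      intro k
      have h1 : ‖MaderAux.NN T X k k‖ = Fintype.card V + 1 := by
        simp only [MaderAux.NN, Matrix.of_apply, hX3]
        rw [Real.norm_of_nonneg]; positivity
      rw [h1]
      calc ∑ j ∈ Finset.univ.erase k, ‖MaderAux.NN T X k j‖
          ≤ ∑ j ∈ Finset.univ.erase k, (1 : ℝ) := by
            refine Finset.sum_le_sum fun j hj => hX4 _ _ ?_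
            intro h
            exact (Finset.ne_of_mem_erase hj) (Subtype.ext h.symm)
        _ = ((Finset.univ.erase k).card : ℝ) := by simp
        _ ≤ (Fintype.card V : ℝ) := by
            exact_mod_cast (Finset.card_le_univ _).trans (Fintype.card_subtype_le _)
        _ < _ := by linarith
    refine ⟨Sym2.lift ⟨X, hX1⟩, ?_, ?_⟩
    · rw [hx]; exact hD
    · rw [hevP, hx]
      exact (MaderAux.det_iff T X c hD S).2 hX5
  have hD0 : (MaderAux.NN T Xp).det ≠ 0 := by
    obtain ⟨x, hx, _⟩ := hmatch ∅ ⟨0, Fin.elim0, Fin.elim0, fun i => i.elim0, fun i => i.elim0,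
      fun i => i.elim0, by simp⟩
    intro h
    rw [← hevD, h] at hx
    simp at hx
  have hprod : (MaderAux.NN T Xp).det * ∏ S ∈ Finset.univ.filter (fun S => P S ≠ 0), P S ≠ 0 := by
    refine mul_ne_zero hD0 (Finset.prod_ne_zero_iff.2 fun S hS => ?_)
    exact (Finset.mem_filter.1 hS).2
  obtain ⟨x, hx⟩ : ∃ x : Sym2 V → ℝ, MvPolynomial.eval x ((MaderAux.NN T Xp).det *
      ∏ S ∈ Finset.univ.filter (fun S => P S ≠ 0), P S) ≠ 0 := by
    by_contra hc
    push Not at hc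
    exact hprod (MvPolynomial.funext fun x => by rw [hc x, map_zero])
  rw [map_mul, map_prod] at hx
  have hxD : (MaderAux.NN T (ev x)).det ≠ 0 := by
    rw [← hevD]; exact left_ne_zero_of_mul hx
  have hxP : ∀ S, P S ≠ 0 → MvPolynomial.eval x (P S) ≠ 0 := fun S hS =>
    Finset.prod_ne_zero_iff.1 (right_ne_zero_of_mul hx) S (by simp [hS])
  refine ⟨ℝ, inferInstance, MaderAux.AA T (ev x) c, ?_, ?_, ?_⟩
  · intro u v
    simp only [MaderAux.AA, Matrix.of_apply]
    rw [MaderAux.LL_symm T (ev x) (hsymm x) u v]; ring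
  · intro v
    simp [MaderAux.AA]
  · intro S
    have hsub : S.image Subtype.val ⊆ T := by
      intro v hv
      obtain ⟨t, _, rfl⟩ := Finset.mem_image.1 hv
      exact t.2
    constructor
    · intro h
      refine MaderAux.matchable_of_pk G T σ _ hsub ?_
      refine MaderAux.pk_of_ns G (ev x) (hsymm x) (hsupp x) _ _ _ _ le_rfl ?_
        ((MaderAux.det_iff T (ev x) c hxD S).1 h)
      rw [Finset.disjoint_left]
      intro v h1 h2
      exact (Finset.mem_compl.1 h2) (hsub h1)
    · intro h
      obtain ⟨x0, _, h0⟩ := hmatch S h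
      rw [← hevP]
      apply hxP
      intro h1
      rw [h1] at h0
      simp at h0
end
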